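/- Finite-time existence for kernels of quadratic growth: Let K be a kernel with K(x,y,z) ≤ x̌² y̌² φ(z), which is twice differentiable in its first argument with ∂₁²K(x,y,z) ≤ y̌² φ(z), where φ ∈ Y⁺_{0,2}. Then for any nonzero c₀ ∈ Y⁺_{0,2}, setting T₀ := (2‖φ‖_{0,2}(M₀(c₀) + M₂(c₀)))^{-1}, there exists a weak solution c of CGEDG with kernel K and initial datum c₀ on [0,T₀) taking values in Y⁺_{0,2}, which conserves the zeroth moment (M₀(c_t) = M₀(c₀)) and the first moment (M₁(c_t) = M₁(c₀)) for all t ∈ [0,T₀), and whose second moment satisfies M₂(c_t) ≤ ((M₀(c₀)+M₂(c₀))^{-1} − 2‖φ‖_{0,2} t)^{-1} − M₀(c₀) for all t ∈ [0,T₀). -/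

import Mathlib

open MeasureTheory Set Filter
open scoped ENNReal Topology

noncomputable section

/-- `x̂ := min 1 x` -/
def hatm (x : ℝ) : ℝ := min 1 x

/-- `x̌ := max 1 x` -/
def checkm (x : ℝ) : ℝ := max 1 x

/-- discrete Laplacian `(Δ_z f)(x) = f(x+z) - 2 f(x) + f(x-z)` -/
def dLap (f : ℝ → ℝ) (z x : ℝ) : ℝ := f (x + z) - 2 * f x + f (x - z)

/-- bounded measurable test function -/
def BddMeas (f : ℝ → ℝ) : Prop := Measurable f ∧ ∃ M : ℝ, ∀ x, |f x| ≤ M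

/-- the weighted L¹ norm `‖c‖_{-β,r} = ∫₀^∞ (x^{-β} + x^r) |c x| dx` -/
def Ynorm (β r : ℝ) (c : ℝ → ℝ) : ℝ :=
  ∫ x in Ioi (0:ℝ), (x ^ (-β) + x ^ r) * |c x|

/-- membership in the weighted space `Y_{-β,r}` -/
def MemY (β r : ℝ) (c : ℝ → ℝ) : Prop :=
  Measurable c ∧ IntegrableOn (fun x => (x ^ (-β) + x ^ r) * |c x|) (Ioi (0:ℝ))

/-- membership in the positive cone `Y⁺_{-β,r}` -/
def MemYplus (β r : ℝ) (c : ℝ → ℝ) : Prop :=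
  MemY β r c ∧ ∀ᵐ x ∂(volume.restrict (Ioi (0:ℝ))), 0 ≤ c x

/-- the moment `M_l(c) = ∫₀^∞ x^l c x dx` -/
def Mom (l : ℝ) (c : ℝ → ℝ) : ℝ := ∫ x in Ioi (0:ℝ), x ^ l * c x

/-- finiteness of the `l`-th moment -/
def MomFin (l : ℝ) (c : ℝ → ℝ) : Prop :=
  IntegrableOn (fun x => x ^ l * c x) (Ioi (0:ℝ))

/-- the mixed moment `M_{-α,λ}(c) = ∫₀^∞ x̂^{-α} x̌^λ c x dx` -/
def MomMix (a lam : ℝ) (c : ℝ → ℝ) : ℝ :=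
  ∫ x in Ioi (0:ℝ), hatm x ^ (-a) * checkm x ^ lam * c x

/-- `‖φ‖₀ = ∫₀^∞ φ` -/
def phiNorm0 (φ : ℝ → ℝ) : ℝ := ∫ z in Ioi (0:ℝ), φ z

/-- `‖φ‖_{0,r} = ∫₀^∞ (1 + z^r) φ(z) dz` -/
def phiNorm (r : ℝ) (φ : ℝ → ℝ) : ℝ := ∫ z in Ioi (0:ℝ), (1 + z ^ r) * φ z

/-- a kernel: measurable, nonnegative, symmetric in the first two arguments,
vanishing for `z > x` -/
structure IsKernel (K : ℝ → ℝ → ℝ → ℝ) : Prop where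
  meas : Measurable (fun p : ℝ × ℝ × ℝ => K p.1 p.2.1 p.2.2)
  nonneg : ∀ x y z, 0 ≤ K x y z
  symm : ∀ x y z, K x y z = K y x z
  vanish : ∀ x y z, x < z → K x y z = 0

/-- the domain `D = {(x,y,z) ∈ [0,∞)³ : x ≥ z, y ≥ z}` -/
def Dcgedg : Set (ℝ × ℝ × ℝ) :=
  {p | 0 ≤ p.1 ∧ 0 ≤ p.2.1 ∧ 0 ≤ p.2.2 ∧ p.2.2 ≤ p.1 ∧ p.2.2 ≤ p.2.1}

/-- weak solution of CGEDG with kernel `K`, initial datum `c₀` on `[0,T)`,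
taking values in `Y⁺_{-β,r}`.  Coordinates: `p = (s, x, y, z)`. -/
structure IsWeakSolution (K : ℝ → ℝ → ℝ → ℝ) (β r : ℝ) (T : ℝ≥0∞)
    (c₀ : ℝ → ℝ) (c : ℝ → ℝ → ℝ) : Prop where
  mem : ∀ t : ℝ, 0 ≤ t → ENNReal.ofReal t < T → MemYplus β r (c t)
  cont : ∀ f : ℝ → ℝ, BddMeas f →
    ContinuousOn (fun t => ∫ x in Ioi (0:ℝ), f x * c t x)
      {t : ℝ | 0 ≤ t ∧ ENNReal.ofReal t < T}
  bdd : ∃ C : ℝ, ∀ t : ℝ, 0 ≤ t → ENNReal.ofReal t < T → Ynorm β r (c t) ≤ C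
  integ : ∀ t : ℝ, 0 ≤ t → ENNReal.ofReal t < T →
    IntegrableOn (fun p : ℝ × ℝ × ℝ × ℝ =>
        K p.2.1 p.2.2.1 p.2.2.2 * c p.1 p.2.1 * c p.1 p.2.2.1)
      ((Ioc (0:ℝ) t) ×ˢ Dcgedg)
  weak : ∀ t : ℝ, 0 ≤ t → ENNReal.ofReal t < T → ∀ f : ℝ → ℝ, BddMeas f →
    (∫ x in Ioi (0:ℝ), f x * (c t x - c₀ x)) =
      ∫ p in (Ioc (0:ℝ) t) ×ˢ Dcgedg,
        dLap f p.2.2.2 p.2.1 *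
          (K p.2.1 p.2.2.1 p.2.2.2 * c p.1 p.2.1 * c p.1 p.2.2.1)

/-- the bound on the second derivative of the kernel in its first argument:
`∂₁² K(x,y,z) ≤ ŷ^{-α} y̌^λ φ(z)` for `x ≥ 0` (together with twice
differentiability in the first argument). -/
def SecondDerivBound (K : ℝ → ℝ → ℝ → ℝ) (a lam : ℝ) (φ : ℝ → ℝ) : Prop :=
  ∀ y z, 0 ≤ y → 0 ≤ z → ∀ x, 0 ≤ x →
    DifferentiableWithinAt ℝ (fun w => K w y z) (Ici 0) x ∧
    DifferentiableWithinAt ℝ (derivWithin (fun w => K w y z) (Ici 0)) (Ici 0) x ∧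
    derivWithin (derivWithin (fun w => K w y z) (Ici 0)) (Ici 0) x ≤
      hatm y ^ (-a) * checkm y ^ lam * φ z

/-- the singular bound `(min(1,x-z))^{-α} K(x,y,z) ≤ Cα x̂^{-2α} ŷ^{-α} x̌^λ y̌^λ φ(z)`
for `x ≥ z ≥ 0`. -/
def SingularBound (K : ℝ → ℝ → ℝ → ℝ) (a lam Ca : ℝ) (φ : ℝ → ℝ) : Prop :=
  ∀ x y z, 0 ≤ y → 0 ≤ z → z ≤ x →
    (min 1 (x - z)) ^ (-a) * K x y z ≤
      Ca * hatm x ^ (-(2*a)) * hatm y ^ (-a) * checkm x ^ lam * checkm y ^ lam * φ z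

/-- the global existence assumption (Assumption 1.3) with parameters `μ, ν, α` and
weight `φ`; here `λ = max μ ν`. -/
structure GlobalExistenceAssumption (K : ℝ → ℝ → ℝ → ℝ) (μ ν a : ℝ) (φ : ℝ → ℝ) :
    Prop where
  hμ : μ ∈ Icc (0:ℝ) 2
  hν : ν ∈ Icc (0:ℝ) 2
  hμν : μ + ν ≤ 3
  hlam : 1 < max μ ν
  ha : 0 ≤ a
  hφ : MemYplus (2*a) (2 * max μ ν) φ
  growth : ∀ x y z, 0 ≤ x → 0 ≤ y → 0 ≤ z →
    K x y z ≤ hatm x ^ (-a) * hatm y ^ (-a) *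
      ((checkm x ^ μ * checkm y ^ ν + checkm x ^ ν * checkm y ^ μ) / 2) * φ z
  deriv2 : SecondDerivBound K a (max μ ν) φ
  sing : 0 < a → ∃ Ca > 0, SingularBound K a (max μ ν) Ca φ

/-- the gelation time of a solution on `[0,T)`:
`T_gel = sup { t ∈ [0,T) : M₂(c_t) < ∞ }` (as an extended real). -/
def gelTime (T : ℝ≥0∞) (c : ℝ → ℝ → ℝ) : ℝ≥0∞ :=
  sSup {s : ℝ≥0∞ | ∃ t : ℝ, s = ENNReal.ofReal t ∧ 0 ≤ t ∧
    ENNReal.ofReal t < T ∧ MomFin 2 (c t)}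

/-- the truncated kernel `K_n` -/
def Ktrunc (K : ℝ → ℝ → ℝ → ℝ) (n : ℕ) (x y z : ℝ) : ℝ :=
  if (1/(n:ℝ) < x ∧ x < n) ∧ (1/(n:ℝ) < y ∧ y < n) ∧ (1/(n:ℝ) < z ∧ z < n) ∧
     (0 < x + z ∧ x + z < n) ∧ (0 < y + z ∧ y + z < n) ∧
     1/(n:ℝ) < x - z ∧ 1/(n:ℝ) < y - z
  then K x y z else 0

/-- the right-hand side of the truncated system; coordinates `p = (z, y)`. -/
def truncRHS (K : ℝ → ℝ → ℝ → ℝ) (n : ℕ) (c : ℝ → ℝ) (x : ℝ) : ℝ :=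
  (∫ p in (Ioi (0:ℝ)) ×ˢ (Ioi (0:ℝ)),
      Ktrunc K n p.2 (x - p.1) p.1 * c p.2 * c (x - p.1))
  - (∫ p in (Ioi (0:ℝ)) ×ˢ (Ioi (0:ℝ)),
      Ktrunc K n x p.2 p.1 * c x * c p.2)
  - (∫ p in (Ioi (0:ℝ)) ×ˢ (Ioi (0:ℝ)),
      Ktrunc K n p.2 x p.1 * c p.2 * c x)
  + (∫ p in (Ioi (0:ℝ)) ×ˢ (Ioi (0:ℝ)),
      Ktrunc K n (x + p.1) p.2 p.1 * c (x + p.1) * c p.2)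

/-- classical solution of the truncated system on `L¹((1/n,n))`, extended by zero
outside `(1/n, n)`. -/
structure IsTruncatedSolution (K : ℝ → ℝ → ℝ → ℝ) (n : ℕ) (c : ℝ → ℝ → ℝ) :
    Prop where
  meas : ∀ t : ℝ, Measurable (c t)
  zero_outside : ∀ t : ℝ, ∀ x, x ∉ Ioo (1/(n:ℝ)) (n:ℝ) → c t x = 0
  integrable : ∀ t : ℝ, 0 ≤ t → IntegrableOn (c t) (Ioo (1/(n:ℝ)) (n:ℝ))
  ode : ∀ x ∈ Ioo (1/(n:ℝ)) (n:ℝ), ∀ t : ℝ, 0 ≤ t →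
    HasDerivWithinAt (fun s => c s x) (truncRHS K n (c t) x) (Ici 0) t

/-- de la Vallée-Poussin class `C_VP` -/
structure IsCVP (σ : ℝ → ℝ) : Prop where
  contDiff : ContDiffOn ℝ 2 σ (Ici 0)
  nonneg : ∀ x, 0 ≤ x → 0 ≤ σ x
  convex : ConvexOn ℝ (Ici 0) σ
  zero : σ 0 = 0
  deriv_zero : derivWithin σ (Ici 0) 0 = 0
  deriv_concave : ConcaveOn ℝ (Ici 0) (derivWithin σ (Ici 0))
  deriv_pos : ∀ x, 0 < x → 0 < derivWithin σ (Ici 0) x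
  deriv_top : Tendsto (derivWithin σ (Ici 0)) atTop atTop
  slope_top : Tendsto (fun x => σ x / x) atTop atTop

/-!
For a prescribed distribution of the partner the equation is the Kolmogorov forward equation of a
process jumping from `x` to `x ± z` at equal rates, so test functions evolve by their discrete
Laplacian. As `Δ_z (1 + x²) = 2 z²` and `K(x,y,z) ≤ (1 + x²) (1 + y²) φ(z)`, the weight `1 + x²`
gives the Riccati inequality `S' ≤ 2 M₂(φ) S²` for `S = M₀ + M₂`; the functions `1` and `x` are
harmonic, hence conserved. The bound on `∂₁²K` enters by duality: the density gains mass at `x` at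
a rate governed by `Δ_z K(·,y,z)(x) ≤ z² (1 + y²) φ(z)`, so bounded densities remain bounded.

Solutions are limits of an explicit Euler scheme on measures, for kernels cut off by a concave
function, which keeps the bound on `Δ_z K`. For given rates the scheme is linear in the initial
measure. Splitting that measure into a part with bounded density and finite fourth moment, both
of which are propagated, and a small remainder shows that the measures weighted by `1 + x²` stay
uniformly absolutely continuous. Together with equicontinuity in time this yields a subsequence
converging on every measurable set, which suffices to pass to the limit in the quadratic term.
-/

namespace CGEDG

/-! ### Setwise convergence of measures -/

section SetwiseConvergence

variable {α ι : Type*} [MeasurableSpace α]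

/-- Convergence of the measures `p i` to `q` on every measurable set. -/
def SetwiseTendsto (p : ι → Measure α) (l : Filter ι) (q : Measure α) : Prop :=
  ∀ B, MeasurableSet B → Tendsto (fun i => p i B) l (𝓝 (q B))

/-- Uniform absolute continuity of a family of measures with respect to `ν`, in the form:
up to an arbitrarily small error, each `p i` is dominated by a multiple of `ν`; for finite `ν` this
is the equi-integrability of the densities. -/
def UnifAbsCont (ν : Measure α) (p : ι → Measure α) : Prop :=
  ∀ ε : ℝ≥0∞, ε ≠ 0 → ∃ C : ℝ≥0∞, C ≠ ∞ ∧ ∀ i A, MeasurableSet A → p i A ≤ ε + C * ν A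

theorem UnifAbsCont.absolutelyContinuous {ν : Measure α} {p : ι → Measure α}
    (h : UnifAbsCont ν p) (i : ι) : p i ≪ ν := by
  refine .mk fun A hA hνA => nonpos_iff_eq_zero.1 (le_of_forall_pos_le_add fun ε hε => ?_)
  obtain ⟨C, -, hpC⟩ := h ε hε.ne'
  simpa only [hνA, mul_zero, add_zero, zero_add] using hpC i A hA

theorem SetwiseTendsto.absolutelyContinuous {p : ι → Measure α} {l : Filter ι} [l.NeBot]
    {q ν : Measure α} (h : SetwiseTendsto p l q) (hp : ∀ i, p i ≪ ν) : q ≪ ν :=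
  .mk fun A hA hνA => tendsto_nhds_unique (h A hA) (by simp only [hp _ hνA, tendsto_const_nhds])

theorem SetwiseTendsto.isFiniteMeasure {p : ι → Measure α} {l : Filter ι} [l.NeBot]
    {q : Measure α} (h : SetwiseTendsto p l q) {M : ℝ≥0∞} (hM : M ≠ ∞) (hp : ∀ i, p i univ ≤ M) :
    IsFiniteMeasure q :=
  ⟨(le_of_tendsto' (h univ .univ) hp).trans_lt hM.lt_top⟩

theorem SetwiseTendsto.tendsto_lintegral_simpleFunc {p : ι → Measure α} {l : Filter ι}
    {q : Measure α} (h : SetwiseTendsto p l q) (f : SimpleFunc α ℝ≥0∞) (hf : ∀ x, f x ≠ ∞) :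
    Tendsto (fun i => f.lintegral (p i)) l (𝓝 (f.lintegral q)) := by
  refine tendsto_finsetSum _ fun c hc => ?_
  obtain ⟨x, rfl⟩ := SimpleFunc.mem_range.1 hc
  exact ENNReal.Tendsto.const_mul (h _ (f.measurableSet_preimage _)) (Or.inr (hf x))

theorem UnifAbsCont.comp {κ : Type*} {ν : Measure α} {p : ι → Measure α}
    (h : UnifAbsCont ν p) (e : κ → ι) : UnifAbsCont ν (fun k => p (e k)) := by
  intro ε hε
  obtain ⟨C, hC, hA⟩ := h ε hε
  exact ⟨C, hC, fun k => hA (e k)⟩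

theorem UnifAbsCont.exists_univ_le {ν : Measure α} [IsFiniteMeasure ν] {p : ι → Measure α}
    (h : UnifAbsCont ν p) : ∃ M : ℝ≥0∞, M ≠ ∞ ∧ ∀ i, p i univ ≤ M := by
  obtain ⟨C, hC, hA⟩ := h 1 one_ne_zero
  exact ⟨1 + C * ν univ, by finiteness, fun i => hA i univ .univ⟩

theorem tendsto_zero_of_forall_le_add_mul {m n : ℕ → ℝ≥0∞} (hn : Tendsto n atTop (𝓝 0))
    (h : ∀ ε : ℝ≥0∞, ε ≠ 0 → ∃ C : ℝ≥0∞, C ≠ ∞ ∧ ∀ k, m k ≤ ε + C * n k) :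
    Tendsto m atTop (𝓝 0) := by
  refine ENNReal.tendsto_nhds_zero.2 fun ε hε => ?_
  obtain ⟨C, hC, hm⟩ := h (ε / 2) (ENNReal.half_pos hε.ne').ne'
  have hCn : Tendsto (fun k => C * n k) atTop (𝓝 0) := by
    simpa only [mul_zero] using ENNReal.Tendsto.const_mul hn (Or.inr hC)
  filter_upwards [hCn.eventually_le_const (ENNReal.half_pos hε.ne')] with k hk
  calc m k ≤ ε / 2 + ε / 2 := (hm k).trans (by gcongr)
    _ = ε := ENNReal.add_halves ε

theorem isSetRing_measurableSet : IsSetRing {s : Set α | MeasurableSet s} where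
  empty_mem := .empty
  union_mem _ _ := .union
  sdiff_mem _ _ := .diff

theorem exists_measure_eq_of_absCont {ν : Measure α} [IsFiniteMeasure ν] {m : Set α → ℝ≥0∞}
    (m_empty : m ∅ = 0)
    (m_union : ∀ A B, MeasurableSet B → Disjoint A B → m (A ∪ B) = m A + m B)
    (m_le : ∀ ε : ℝ≥0∞, ε ≠ 0 → ∃ C : ℝ≥0∞, C ≠ ∞ ∧ ∀ A, MeasurableSet A → m A ≤ ε + C * ν A) :
    ∃ q : Measure α, ∀ A, MeasurableSet A → q A = m A := by
  let content : AddContent ℝ≥0∞ {s : Set α | MeasurableSet s} :=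
    isSetRing_measurableSet.addContent_of_union m m_empty fun _ ht => m_union _ _ ht
  have m_ne_top : ∀ A, MeasurableSet A → m A ≠ ∞ := by
    intro A hA
    obtain ⟨C, hC, hmC⟩ := m_le 1 one_ne_zero
    exact ((hmC A hA).trans_lt (by finiteness)).ne
  have m_tendsto : ∀ s : ℕ → Set α, (∀ n, MeasurableSet (s n)) → Antitone s → ⋂ n, s n = ∅ →
      Tendsto (fun n => m (s n)) atTop (𝓝 0) := by
    intro s hs s_anti s_inter
    have hν : Tendsto (fun n => ν (s n)) atTop (𝓝 0) := by
      simpa only [s_inter, measure_empty, Function.comp_def] using tendsto_measure_iInter_atTop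
        (fun n => (hs n).nullMeasurableSet) s_anti ⟨0, measure_ne_top ν _⟩
    refine tendsto_zero_of_forall_le_add_mul hν fun ε hε => ?_
    obtain ⟨C, hC, hmC⟩ := m_le ε hε
    exact ⟨C, hC, fun k => hmC _ (hs k)⟩
  refine ⟨Measure.ofMeasurable (fun A _ => m A) m_empty fun f hf hd => ?_,
    fun A hA => Measure.ofMeasurable_apply A hA⟩
  exact addContent_iUnion_eq_sum_of_tendsto_zero isSetRing_measurableSet content m_ne_top
    (fun s hs => m_tendsto s hs) hf (.iUnion hf) hd

theorem UnifAbsCont.exists_setwiseTendsto {ν : Measure α} [IsFiniteMeasure ν]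
    {p : ι → Measure α} (h : UnifAbsCont ν p) (U : Ultrafilter ι) :
    ∃ q : Measure α, SetwiseTendsto p U q := by
  have hlim : ∀ A, ∃ a : ℝ≥0∞, Tendsto (fun i => p i A) U (𝓝 a) := fun A =>
    let ⟨a, _, ha⟩ := isCompact_univ.ultrafilter_le_nhds (U.map fun i => p i A) (by simp)
    ⟨a, ha⟩
  choose m hm using hlim
  obtain ⟨q, hq⟩ : ∃ q : Measure α, ∀ A, MeasurableSet A → q A = m A := by
    refine exists_measure_eq_of_absCont (ν := ν) ?_ (fun A B hB hAB => ?_) fun ε hε => ?_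
    · exact tendsto_nhds_unique (hm ∅) (by simp only [measure_empty, tendsto_const_nhds])
    · refine tendsto_nhds_unique (hm (A ∪ B)) ?_
      simpa only [measure_union hAB hB] using (hm A).add (hm B)
    · obtain ⟨C, hC, hpC⟩ := h ε hε
      exact ⟨C, hC, fun A hA => le_of_tendsto' (hm A) fun i => hpC i A hA⟩
  exact ⟨q, fun A hA => (hq A hA).symm ▸ hm A⟩

theorem tendsto_of_le_liminf_of_tendsto_add {l : Filter ι} {u v : ι → ℝ≥0∞} {a b : ℝ≥0∞}
    (ha : a ≤ liminf u l) (hb : b ≤ liminf v l) (hab : a + b ≠ ∞)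
    (h : Tendsto (fun i => u i + v i) l (𝓝 (a + b))) : Tendsto u l (𝓝 a) := by
  refine (tendsto_iff_ultrafilter _ _ _).2 fun U hU => ?_
  obtain ⟨x, -, hx⟩ := isCompact_univ.ultrafilter_le_nhds (U.map u) (by simp)
  obtain ⟨y, -, hy⟩ := isCompact_univ.ultrafilter_le_nhds (U.map v) (by simp)
  have hxy : x + y = a + b :=
    tendsto_nhds_unique (Tendsto.add hx hy) (h.mono_left hU)
  have hax : a ≤ x := (ha.trans (liminf_le_liminf_of_le hU)).trans_eq (Tendsto.liminf_eq hx)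
  have hby : b ≤ y := (hb.trans (liminf_le_liminf_of_le hU)).trans_eq (Tendsto.liminf_eq hy)
  have hxa : x = a := by
    refine le_antisymm ?_ hax
    by_contra! hlt
    exact (ENNReal.add_lt_add_of_lt_of_le (ne_top_of_le_ne_top hab le_add_self) hlt hby).ne' hxy
  exact hxa ▸ hx

theorem SetwiseTendsto.lintegral_le_liminf {p : ι → Measure α} {l : Filter ι}
    {q : Measure α} (h : SetwiseTendsto p l q) {f : α → ℝ≥0∞} {g : ι → α → ℝ≥0∞}
    (hfg : ∀ᶠ i in l, ∀ x, f x ≤ g i x) :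
    ∫⁻ x, f x ∂q ≤ liminf (fun i => ∫⁻ x, g i x ∂(p i)) l := by
  rw [lintegral_eq_nnreal]
  refine iSup₂_le fun φ hφ => ?_
  rcases l.eq_or_neBot with rfl | _
  · simp
  rw [← (h.tendsto_lintegral_simpleFunc _ fun x => ENNReal.coe_ne_top).liminf_eq]
  refine liminf_le_liminf (hfg.mono fun i hi => ?_)
  rw [← SimpleFunc.lintegral_eq_lintegral]
  exact lintegral_mono fun x => (hφ x).trans (hi x)

theorem SetwiseTendsto.lintegral_liminf_le {p : ℕ → Measure α} {q : Measure α}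
    (h : SetwiseTendsto p atTop q) {g : ℕ → α → ℝ≥0∞} (hg : ∀ n, Measurable (g n)) :
    ∫⁻ x, liminf (fun n => g n x) atTop ∂q ≤ liminf (fun n => ∫⁻ x, g n x ∂(p n)) atTop := by
  simp only [liminf_eq_iSup_iInf_of_nat (u := fun n => g n _)]
  rw [lintegral_iSup (f := fun k x => ⨅ n ≥ k, g n x) (fun k => .iInf fun n => .iInf fun _ => hg n)
    fun i j hij x => biInf_mono fun n hn => hij.trans hn]
  refine iSup_le fun k => h.lintegral_le_liminf ?_
  filter_upwards [eventually_ge_atTop k] with n hn x using biInf_le _ hn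

theorem SetwiseTendsto.tendsto_lintegral {p : ℕ → Measure α} {q : Measure α} [IsFiniteMeasure q]
    (h : SetwiseTendsto p atTop q) {g : ℕ → α → ℝ≥0∞} {f : α → ℝ≥0∞}
    (hg : ∀ n, Measurable (g n)) {C : ℝ≥0∞} (hC : C ≠ ∞) (hgC : ∀ n x, g n x ≤ C)
    (hgf : ∀ x, Tendsto (fun n => g n x) atTop (𝓝 (f x))) :
    Tendsto (fun n => ∫⁻ x, g n x ∂(p n)) atTop (𝓝 (∫⁻ x, f x ∂q)) := by
  have hf : Measurable f := measurable_of_tendsto_metrizable hg (tendsto_pi_nhds.2 hgf)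
  have hfC : ∀ x, f x ≤ C := fun x => le_of_tendsto' (hgf x) fun n => hgC n x
  have add_compl : ∀ (u : α → ℝ≥0∞) (ρ : Measure α), Measurable u → (∀ x, u x ≤ C) →
      ∫⁻ x, u x ∂ρ + ∫⁻ x, (C - u x) ∂ρ = C * ρ univ := by
    intro u ρ hu huC
    rw [← lintegral_add_left hu, ← lintegral_const]
    exact lintegral_congr fun x => add_tsub_cancel_of_le (huC x)
  have hcompl : ∀ x, Tendsto (fun n => C - g n x) atTop (𝓝 (C - f x)) := fun x =>
    ENNReal.Tendsto.sub tendsto_const_nhds (hgf x) (Or.inl hC)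
  refine tendsto_of_le_liminf_of_tendsto_add (b := ∫⁻ x, (C - f x) ∂q)
    (v := fun n => ∫⁻ x, (C - g n x) ∂(p n)) ?_ ?_ ?_ ?_
  · simpa only [(hgf _).liminf_eq] using h.lintegral_liminf_le hg
  · simpa only [(hcompl _).liminf_eq] using
      h.lintegral_liminf_le fun n => (hg n).const_sub C
  · rw [add_compl f q hf hfC]
    finiteness
  · simp only [add_compl _ _ (hg _) (hgC _), add_compl f q hf hfC]
    exact ENNReal.Tendsto.const_mul (h univ .univ) (Or.inr hC)

theorem lintegral_withDensity_div {μ : Measure α} {w f : α → ℝ≥0∞} (hw : Measurable w)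
    (hw0 : ∀ x, w x ≠ 0) (hwt : ∀ x, w x ≠ ∞) (hf : Measurable f) :
    ∫⁻ x, f x / w x ∂μ.withDensity w = ∫⁻ x, f x ∂μ := by
  rw [lintegral_withDensity_eq_lintegral_mul _ hw (g := fun x => f x / w x) (hf.div hw)]
  exact lintegral_congr fun x => ENNReal.mul_div_cancel (hw0 x) (hwt x)

theorem SetwiseTendsto.tendsto_lintegral_of_withDensity {μ : ℕ → Measure α} {m : Measure α}
    {w : α → ℝ≥0∞} (hw : Measurable w) (hw0 : ∀ x, w x ≠ 0) (hwt : ∀ x, w x ≠ ∞)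
    [IsFiniteMeasure (m.withDensity w)]
    (h : SetwiseTendsto (fun n => (μ n).withDensity w) atTop (m.withDensity w))
    {g : ℕ → α → ℝ≥0∞} {f : α → ℝ≥0∞} (hg : ∀ n, Measurable (g n))
    {C : ℝ≥0∞} (hC : C ≠ ∞) (hgC : ∀ n x, g n x ≤ C * w x)
    (hgf : ∀ x, Tendsto (fun n => g n x) atTop (𝓝 (f x))) :
    Tendsto (fun n => ∫⁻ x, g n x ∂(μ n)) atTop (𝓝 (∫⁻ x, f x ∂m)) := by
  have hf : Measurable f := measurable_of_tendsto_metrizable hg (tendsto_pi_nhds.2 hgf)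
  have key := h.tendsto_lintegral (g := fun n x => g n x / w x) (f := fun x => f x / w x)
    (fun n => (hg n).div hw) hC (fun n x => ENNReal.div_le_of_le_mul (hgC n x))
    fun x => ENNReal.Tendsto.div_const (hgf x) (Or.inr (hw0 x))
  simpa only [lintegral_withDensity_div hw hw0 hwt hf,
    lintegral_withDensity_div hw hw0 hwt (hg _)] using key

end SetwiseConvergence

section Curves

theorem exists_strictMono_forall_tendsto {κ X : Type*} [Countable κ] [TopologicalSpace X]
    [CompactSpace X] [FirstCountableTopology X] (x : ℕ → κ → X) :
    ∃ e : ℕ → ℕ, StrictMono e ∧ ∀ k, ∃ y, Tendsto (fun n => x (e n) k) atTop (𝓝 y) := by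
  obtain ⟨y, -, e, he, hy⟩ := isCompact_univ.tendsto_subseq (x := x) fun _ => mem_univ _
  exact ⟨e, he, fun k => ⟨y k, tendsto_pi_nhds.1 hy k⟩⟩

/-- Equicontinuity in time of the measure-valued curves `p n`, uniform over measurable sets, up to
an error that vanishes as `n → ∞`. -/
def AsymptEquicont {α : Type*} [MeasurableSpace α] (p : ℕ → ℝ → Measure α) : Prop :=
  ∀ ε : ℝ≥0∞, ε ≠ 0 → ∃ δ > 0, ∀ᶠ n in atTop, ∀ s s' : ℝ, |s - s'| ≤ δ →
    ∀ B, MeasurableSet B → p n s B ≤ p n s' B + ε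

theorem AsymptEquicont.limit_le {α : Type*} [MeasurableSpace α] {p : ℕ → ℝ → Measure α}
    (h : AsymptEquicont p) {U V : Ultrafilter ℕ} (hU : (U : Filter ℕ) ≤ atTop)
    (hV : (V : Filter ℕ) ≤ atTop) {qU qV : ℝ → Measure α}
    (hqU : ∀ s, SetwiseTendsto (fun n => p n s) U (qU s))
    (hqV : ∀ s, SetwiseTendsto (fun n => p n s) V (qV s))
    (hrat : ∀ r : ℚ, qU r = qV r) (s : ℝ) : qU s ≤ qV s := by
  refine Measure.le_iff.2 fun B hB => ENNReal.le_of_forall_pos_le_add fun ε hε _ => ?_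
  obtain ⟨δ, hδ, hsub⟩ := h (ε / 2) (ENNReal.half_pos (by exact_mod_cast hε.ne')).ne'
  obtain ⟨r, hr⟩ := exists_rat_btwn (sub_lt_self s hδ)
  have hdist : |s - r| ≤ δ := abs_sub_le_iff.2 ⟨by linarith, by linarith⟩
  have hUr : qU s B ≤ qU r B + ε / 2 :=
    le_of_tendsto_of_tendsto (hqU s B hB) ((hqU r B hB).add_const _)
      (hU (hsub.mono fun n hn => hn s r hdist B hB))
  have hVr : qV r B ≤ qV s B + ε / 2 :=
    le_of_tendsto_of_tendsto (hqV r B hB) ((hqV s B hB).add_const _)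
      (hV (hsub.mono fun n hn => hn r s (abs_sub_comm s (r : ℝ) ▸ hdist) B hB))
  calc qU s B ≤ qV r B + ε / 2 := hrat r ▸ hUr
    _ ≤ qV s B + ε / 2 + ε / 2 := by gcongr
    _ = qV s B + ε := by rw [add_assoc, ENNReal.add_halves]

/-- Uniform absolute continuity supplies limits along ultrafilters; a diagonal subsequence makes
them agree at rational times on rational intervals, and equicontinuity then makes them agree at
every time. -/
theorem AsymptEquicont.exists_subseq_setwiseTendsto {ν : Measure ℝ} [IsFiniteMeasure ν]
    {p : ℕ → ℝ → Measure ℝ} (h : AsymptEquicont p)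
    (hac : UnifAbsCont ν fun i : ℕ × ℝ => p i.1 i.2) :
    ∃ (e : ℕ → ℕ) (q : ℝ → Measure ℝ), StrictMono e ∧
      ∀ s, SetwiseTendsto (fun n => p (e n) s) atTop (q s) := by
  obtain ⟨M, hM, hpM⟩ := hac.exists_univ_le
  obtain ⟨e, he, hlim⟩ := exists_strictMono_forall_tendsto
    fun n (k : ℚ × ℚ × ℚ) => p n k.1 (Ioo k.2.1 k.2.2)
  have h' : AsymptEquicont fun n => p (e n) := fun ε hε =>
    let ⟨δ, hδ, hn⟩ := h ε hε
    ⟨δ, hδ, he.tendsto_atTop.eventually hn⟩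
  have hex : ∀ (U : Ultrafilter ℕ) (s : ℝ), ∃ q, SetwiseTendsto (fun n => p (e n) s) U q :=
    fun U s => (hac.comp fun n => (e n, s)).exists_setwiseTendsto U
  choose q hq using hex
  have hrat : ∀ U V : Ultrafilter ℕ, (U : Filter ℕ) ≤ atTop → (V : Filter ℕ) ≤ atTop →
      ∀ r : ℚ, q U r = q V r := by
    intro U V hU hV r
    have := (hq U r).isFiniteMeasure hM fun n => hpM (e n, r)
    refine Real.measure_ext_Ioo_rat fun a b => ?_
    obtain ⟨y, hy⟩ := hlim (r, a, b)
    exact (tendsto_nhds_unique (hq U r _ measurableSet_Ioo) (hy.mono_left hU)).trans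
      (tendsto_nhds_unique (hq V r _ measurableSet_Ioo) (hy.mono_left hV)).symm
  have hle : ∀ U V : Ultrafilter ℕ, (U : Filter ℕ) ≤ atTop → (V : Filter ℕ) ≤ atTop →
      ∀ s, q U s ≤ q V s := fun U V hU hV =>
    h'.limit_le hU hV (hq U) (hq V) (hrat U V hU hV)
  have hyper : (hyperfilter ℕ : Filter ℕ) ≤ atTop := Nat.hyperfilter_le_atTop
  refine ⟨e, q (hyperfilter ℕ), he, fun s B hB => ?_⟩
  refine (tendsto_iff_ultrafilter _ _ _).2 fun U hU => ?_
  rw [le_antisymm (hle _ U hyper hU s) (hle U _ hU hyper s)]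
  exact hq U s B hB

end Curves

/-! ### Euler steps of jump processes -/

/-- Lebesgue measure on `(0, ∞)`. -/
def halfLine : Measure ℝ := volume.restrict (Ioi (0 : ℝ))

instance : SFinite halfLine := inferInstanceAs (SFinite (volume.restrict _))

theorem ae_halfLine {p : ℝ → Prop} (h : ∀ z, 0 < z → p z) : ∀ᵐ z ∂halfLine, p z :=
  (ae_restrict_iff' measurableSet_Ioi).2 (Eventually.of_forall h)

/-- The weight `1 + x²`; since `max 1 x ^ 2 ≤ 1 + x²`, it controls the growth of the kernel. -/
def weight (x : ℝ) : ℝ≥0∞ := ENNReal.ofReal (1 + x ^ 2)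

@[fun_prop]
theorem measurable_weight : Measurable weight := by unfold weight; fun_prop

theorem one_le_weight (x : ℝ) : 1 ≤ weight x :=
  ENNReal.one_le_ofReal.2 (le_add_of_nonneg_right (sq_nonneg x))

theorem weight_ne_zero (x : ℝ) : weight x ≠ 0 := (one_pos.trans_le (one_le_weight x)).ne'

theorem weight_ne_top (x : ℝ) : weight x ≠ ∞ := ENNReal.ofReal_ne_top

/-- The zeroth moment `∫₀^∞ φ(z) dz`. -/
def mass (φ : ℝ → ℝ≥0∞) : ℝ≥0∞ := ∫⁻ z, φ z ∂halfLine

/-- The second moment `∫₀^∞ z² φ(z) dz`. -/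
def secondMoment (φ : ℝ → ℝ≥0∞) : ℝ≥0∞ := ∫⁻ z, ENNReal.ofReal (z ^ 2) * φ z ∂halfLine

section JumpProcess

variable {φ : ℝ → ℝ≥0∞} {M h : ℝ≥0∞} {k : ℝ × ℝ → ℝ≥0∞} {f : ℝ → ℝ≥0∞}

/-- The total rate at which jumps `x → x ± z` are attempted from `x`, for the jump rate `k (x, z)`
of each of the two directions. -/
def jumpRate (k : ℝ × ℝ → ℝ≥0∞) (x : ℝ) : ℝ≥0∞ := ∫⁻ z, k (x, z) ∂halfLine

/-- The positive part `∫ k(x,z) (f(x+z) + f(x-z)) dz` of the generator of the jump process. -/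
def gain (k : ℝ × ℝ → ℝ≥0∞) (f : ℝ → ℝ≥0∞) (x : ℝ) : ℝ≥0∞ :=
  ∫⁻ z, k (x, z) * (f (x + z) + f (x - z)) ∂halfLine

/-- The negative part `∫ k(x,z) 2f(x) dz` of the generator of the jump process. -/
def loss (k : ℝ × ℝ → ℝ≥0∞) (f : ℝ → ℝ≥0∞) (x : ℝ) : ℝ≥0∞ := ∫⁻ z, k (x, z) * (2 * f x) ∂halfLine

@[fun_prop]
theorem measurable_jumpRate (hk : Measurable k) : Measurable (jumpRate k) :=
  hk.lintegral_prod_right'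

@[fun_prop]
theorem measurable_gain (hk : Measurable k) (hf : Measurable f) : Measurable (gain k f) :=
  Measurable.lintegral_prod_right' (f := fun p : ℝ × ℝ => k p * (f (p.1 + p.2) + f (p.1 - p.2)))
    (by fun_prop)

@[fun_prop]
theorem measurable_loss (hk : Measurable k) (hf : Measurable f) : Measurable (loss k f) :=
  Measurable.lintegral_prod_right' (f := fun p : ℝ × ℝ => k p * (2 * f p.1)) (by fun_prop)

theorem loss_eq (hk : Measurable k) (f : ℝ → ℝ≥0∞) (x : ℝ) :
    loss k f x = jumpRate k x * (2 * f x) :=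
  lintegral_mul_const _ (by fun_prop)

/-- One explicit Euler step, of size `h`, of the Kolmogorov forward equation of the process jumping
from `x` to `x + z` and to `x - z` at rate `k (x, z)` each. -/
def eulerStep (h : ℝ≥0∞) (k : ℝ × ℝ → ℝ≥0∞) (ρ : Measure ℝ) : Measure ℝ :=
  ρ.withDensity (fun x => 1 - 2 * h * jumpRate k x)
  + h • ((ρ.prod halfLine).withDensity k).map (fun p => p.1 + p.2)
  + h • ((ρ.prod halfLine).withDensity k).map (fun p => p.1 - p.2)

instance (h : ℝ≥0∞) (k : ℝ × ℝ → ℝ≥0∞) (ρ : Measure ℝ) [SFinite ρ] : SFinite (eulerStep h k ρ) := by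
  unfold eulerStep; infer_instance

theorem lintegral_eulerStep (h : ℝ≥0∞) (hk : Measurable k) (ρ : Measure ℝ) [SFinite ρ]
    (hf : Measurable f) :
    ∫⁻ x, f x ∂eulerStep h k ρ
      = ∫⁻ x, ((1 - 2 * h * jumpRate k x) * f x + h * gain k f x) ∂ρ := by
  have lintegral_jump : ∀ g : ℝ × ℝ → ℝ, Measurable g →
      ∫⁻ x, f x ∂((ρ.prod halfLine).withDensity k).map g
        = ∫⁻ x, ∫⁻ z, k (x, z) * f (g (x, z)) ∂halfLine ∂ρ := by
    intro g hg
    rw [lintegral_map hf hg, lintegral_withDensity_eq_lintegral_mul _ hk (by fun_prop),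
      lintegral_prod _ (by fun_prop)]
    rfl
  have gain_eq : ∀ x, gain k f x
      = ∫⁻ z, k (x, z) * f (x + z) ∂halfLine + ∫⁻ z, k (x, z) * f (x - z) ∂halfLine := by
    intro x
    rw [← lintegral_add_left (by fun_prop)]
    exact lintegral_congr fun z => mul_add _ _ _
  have h_meas : Measurable fun x => ∫⁻ z, k (x, z) * f (x + z) ∂halfLine :=
    Measurable.lintegral_prod_right' (f := fun p : ℝ × ℝ => k p * f (p.1 + p.2)) (by fun_prop)
  rw [eulerStep, lintegral_add_measure, lintegral_add_measure, lintegral_smul_measure,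
    lintegral_smul_measure, lintegral_jump _ (by fun_prop), lintegral_jump _ (by fun_prop),
    lintegral_withDensity_eq_lintegral_mul _ (by fun_prop) hf, lintegral_add_left (by fun_prop),
    lintegral_const_mul _ (by fun_prop), add_assoc, smul_eq_mul, smul_eq_mul, ← mul_add,
    ← lintegral_add_left h_meas, lintegral_congr gain_eq]
  rfl

theorem eulerStep_add (h : ℝ≥0∞) (hk : Measurable k) (ρ ρ' : Measure ℝ) [SFinite ρ] [SFinite ρ'] :
    eulerStep h k (ρ + ρ') = eulerStep h k ρ + eulerStep h k ρ' := by
  refine Measure.ext_of_lintegral _ fun f hf => ?_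
  simp only [lintegral_add_measure, lintegral_eulerStep h hk _ hf]

/-- The properties of the jump rate `k` which make an Euler step of size `h` stable: jumps stay
in `[0, ∞)`, the rate grows at most like the weight, its discrete Laplacian is bounded above, and
the Courant–Friedrichs–Lewy condition holds. -/
structure IsJumpRate (φ : ℝ → ℝ≥0∞) (M h : ℝ≥0∞) (k : ℝ × ℝ → ℝ≥0∞) : Prop where
  measurable : Measurable k
  vanish : ∀ x z, 0 < z → x < z → k (x, z) = 0
  le : ∀ x z, 0 < z → k (x, z) ≤ weight x * M * φ z
  laplacian_le : ∀ x z, 0 < z →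
    k (x + z, z) + k (x - z, z) ≤ 2 * k (x, z) + M * (ENNReal.ofReal (z ^ 2) * φ z)
  cfl : ∀ x, 2 * h * jumpRate k x ≤ 1

namespace IsJumpRate

theorem retained_add_loss (hk : IsJumpRate φ M h k) (f : ℝ → ℝ≥0∞) (x : ℝ) :
    (1 - 2 * h * jumpRate k x) * f x + h * loss k f x = f x := by
  calc _ = (1 - 2 * h * jumpRate k x + 2 * h * jumpRate k x) * f x := by
        rw [loss_eq hk.measurable]; ring
    _ = f x := by rw [tsub_add_cancel_of_le (hk.cfl x), one_mul]

theorem lintegral_eulerStep_add_loss (hk : IsJumpRate φ M h k) (ρ : Measure ℝ) [SFinite ρ]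
    (hf : Measurable f) :
    ∫⁻ x, f x ∂eulerStep h k ρ + h * ∫⁻ x, loss k f x ∂ρ
      = ∫⁻ x, f x ∂ρ + h * ∫⁻ x, gain k f x ∂ρ := by
  have hkm := hk.measurable
  rw [lintegral_eulerStep h hkm ρ hf, ← lintegral_const_mul _ (by fun_prop),
    ← lintegral_const_mul _ (by fun_prop), ← lintegral_add_right _ (by fun_prop),
    ← lintegral_add_right _ (by fun_prop)]
  refine lintegral_congr fun x => ?_
  rw [add_right_comm, hk.retained_add_loss]

theorem gain_le (hφ : Measurable φ) (hk : IsJumpRate φ M h k) {C : ℝ≥0∞}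
    (hfC : ∀ x z, 0 < z → z ≤ x →
      f (x + z) + f (x - z) ≤ 2 * f x + C * ENNReal.ofReal (z ^ 2) * (f x / weight x)) (x : ℝ) :
    gain k f x ≤ loss k f x + C * M * secondMoment φ * f x := by
  have hkm := hk.measurable
  rw [secondMoment, ← lintegral_const_mul _ (by fun_prop), ← lintegral_mul_const _ (by fun_prop),
    loss, ← lintegral_add_left (by fun_prop)]
  refine lintegral_mono_ae (ae_halfLine fun z hz => ?_)
  rcases lt_or_ge x z with hxz | hxz
  · simp only [hk.vanish x z hz hxz, zero_mul, zero_le]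
  calc k (x, z) * (f (x + z) + f (x - z))
      ≤ k (x, z) * (2 * f x + C * ENNReal.ofReal (z ^ 2) * (f x / weight x)) :=
        mul_le_mul' le_rfl (hfC x z hz hxz)
    _ ≤ k (x, z) * (2 * f x)
        + weight x * M * φ z * (C * ENNReal.ofReal (z ^ 2) * (f x / weight x)) := by
        rw [mul_add]; gcongr; exact hk.le x z hz
    _ = k (x, z) * (2 * f x)
        + C * M * (ENNReal.ofReal (z ^ 2) * φ z) * (weight x * (f x / weight x)) := by ring
    _ = _ := by rw [ENNReal.mul_div_cancel (weight_ne_zero x) (weight_ne_top x)]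

theorem lintegral_eulerStep_le (hφ : Measurable φ) (hk : IsJumpRate φ M h k) (ρ : Measure ℝ)
    [SFinite ρ] (hf : Measurable f) {C : ℝ≥0∞}
    (hfC : ∀ x z, 0 < z → z ≤ x →
      f (x + z) + f (x - z) ≤ 2 * f x + C * ENNReal.ofReal (z ^ 2) * (f x / weight x)) :
    ∫⁻ x, f x ∂eulerStep h k ρ ≤ (1 + h * (C * M * secondMoment φ)) * ∫⁻ x, f x ∂ρ := by
  rw [lintegral_eulerStep h hk.measurable ρ hf, ← lintegral_const_mul _ hf]
  refine lintegral_mono fun x => ?_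
  calc (1 - 2 * h * jumpRate k x) * f x + h * gain k f x
      ≤ (1 - 2 * h * jumpRate k x) * f x + h * (loss k f x + C * M * secondMoment φ * f x) := by
        gcongr; exact hk.gain_le hφ hfC x
    _ = f x + h * (C * M * secondMoment φ * f x) := by
        rw [mul_add, ← add_assoc, hk.retained_add_loss]
    _ = (1 + h * (C * M * secondMoment φ)) * f x := by ring

theorem gain_eq_loss (hk : IsJumpRate φ M h k)
    (hf : ∀ x z, 0 < z → z ≤ x → f (x + z) + f (x - z) = 2 * f x) (x : ℝ) :
    gain k f x = loss k f x := by
  refine lintegral_congr_ae (ae_halfLine fun z hz => ?_)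
  rcases lt_or_ge x z with hxz | hxz
  · simp only [hk.vanish x z hz hxz, zero_mul]
  · simp only [hf x z hz hxz]

theorem lintegral_eulerStep_eq (hk : IsJumpRate φ M h k) (ρ : Measure ℝ) [SFinite ρ]
    (hfm : Measurable f) (hf : ∀ x z, 0 < z → z ≤ x → f (x + z) + f (x - z) = 2 * f x) :
    ∫⁻ x, f x ∂eulerStep h k ρ = ∫⁻ x, f x ∂ρ := by
  rw [lintegral_eulerStep h hk.measurable ρ hfm]
  exact lintegral_congr fun x => by rw [hk.gain_eq_loss hf, hk.retained_add_loss]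

theorem eulerStep_Iio_zero (hk : IsJumpRate φ M h k) (ρ : Measure ℝ) [SFinite ρ]
    (hρ : ρ (Iio 0) = 0) : eulerStep h k ρ (Iio 0) = 0 := by
  rw [← lintegral_indicator_one measurableSet_Iio, hk.lintegral_eulerStep_eq ρ
    (measurable_one.indicator measurableSet_Iio), lintegral_indicator_one measurableSet_Iio, hρ]
  intro x z hz hxz
  have hx : 0 ≤ x := hz.le.trans hxz
  simp only [indicator_of_notMem, mem_Iio, not_lt, hx, add_nonneg hx hz.le, sub_nonneg.2 hxz,
    add_zero, mul_zero]

end IsJumpRate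

theorem lintegral_gain_volume (hk : Measurable k) (hf : Measurable f) :
    ∫⁻ x, gain k f x = ∫⁻ x, (∫⁻ z, (k (x + z, z) + k (x - z, z)) ∂halfLine) * f x := by
  have hkm (x : ℝ) : Measurable fun z => k (x + z, z) + k (x - z, z) := by fun_prop
  simp only [gain, ← lintegral_mul_const _ (hkm _)]
  rw [lintegral_lintegral_swap (by unfold Function.uncurry; fun_prop),
    lintegral_lintegral_swap (f := fun x z => (k (x + z, z) + k (x - z, z)) * f x)
      (by unfold Function.uncurry; fun_prop)]
  refine lintegral_congr fun z => ?_
  simp only [mul_add, add_mul]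
  rw [lintegral_add_left (by fun_prop), lintegral_add_left (by fun_prop), add_comm]
  congr 1
  · simpa only [sub_eq_add_neg, neg_neg, add_neg_cancel_right] using
      (lintegral_add_right_eq_self (μ := volume) (fun x => k (x, z) * f (x - z)) z).symm
  · simpa only [sub_add_cancel] using
      (lintegral_sub_right_eq_self (μ := volume) (fun x => k (x, z) * f (x + z)) z).symm

theorem IsJumpRate.eulerStep_le_volume (hφ : Measurable φ) (hk : IsJumpRate φ M h k)
    (ρ : Measure ℝ) [SFinite ρ] {L : ℝ≥0∞} (hρ : ρ ≤ L • volume) :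
    eulerStep h k ρ ≤ ((1 + h * (M * secondMoment φ)) * L) • volume := by
  have hkm := hk.measurable
  have incoming_le : ∀ x, ∫⁻ z, (k (x + z, z) + k (x - z, z)) ∂halfLine
      ≤ 2 * jumpRate k x + M * secondMoment φ := by
    intro x
    rw [secondMoment, jumpRate, ← lintegral_const_mul _ (by fun_prop),
      ← lintegral_const_mul _ (by fun_prop), ← lintegral_add_right _ (by fun_prop)]
    exact lintegral_mono_ae (ae_halfLine fun z hz => hk.laplacian_le x z hz)
  have lintegral_le : ∀ f : ℝ → ℝ≥0∞, Measurable f →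
      ∫⁻ x, f x ∂eulerStep h k ρ ≤ L * ∫⁻ x, (1 + h * (M * secondMoment φ)) * f x := by
    intro f hf
    rw [lintegral_eulerStep h hkm ρ hf]
    refine (lintegral_mono' hρ le_rfl).trans ?_
    rw [lintegral_smul_measure, smul_eq_mul, lintegral_add_right _ (by fun_prop),
      lintegral_const_mul _ (by fun_prop), lintegral_gain_volume hkm hf,
      ← lintegral_const_mul _ (by fun_prop), ← lintegral_add_right _ (by fun_prop)]
    gcongr with x
    calc _ ≤ (1 - 2 * h * jumpRate k x) * f x
          + h * ((2 * jumpRate k x + M * secondMoment φ) * f x) := by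
          gcongr; exact incoming_le x
      _ = (1 - 2 * h * jumpRate k x + 2 * h * jumpRate k x) * f x
          + h * (M * secondMoment φ) * f x := by ring
      _ = _ := by rw [tsub_add_cancel_of_le (hk.cfl x)]; ring
  refine Measure.le_iff.2 fun A hA => ?_
  have hA' := lintegral_le _ (measurable_one.indicator hA)
  rw [lintegral_const_mul _ (measurable_one.indicator hA), lintegral_indicator_one hA,
    lintegral_indicator_one hA] at hA'
  rwa [Measure.smul_apply, smul_eq_mul, mul_comm _ L, mul_assoc]

end JumpProcess

/-! ### Kernels of quadratic growth -/

section Kernel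

variable {φ : ℝ → ℝ≥0∞} {κ : ℝ → ℝ → ℝ → ℝ≥0∞} {M N h : ℝ≥0∞}

/-- A kernel of quadratic growth, with jump-size profile `φ`, whose discrete Laplacian in the first
argument is bounded above. -/
structure IsQuadraticKernel (φ : ℝ → ℝ≥0∞) (κ : ℝ → ℝ → ℝ → ℝ≥0∞) : Prop where
  measurable_profile : Measurable φ
  measurable : Measurable fun p : ℝ × ℝ × ℝ => κ p.1 p.2.1 p.2.2
  vanish : ∀ x y z, x < z → κ x y z = 0
  le : ∀ x y z, 0 < z → κ x y z ≤ weight x * weight y * φ z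
  laplacian_le : ∀ x y z, 0 < z →
    κ (x + z) y z + κ (x - z) y z ≤ 2 * κ x y z + weight y * (ENNReal.ofReal (z ^ 2) * φ z)

/-- The truncation of the kernel `κ` which makes it bounded in the first argument. A concave
function of `κ`, it inherits the upper bound on the discrete Laplacian. -/
def trunc (φ : ℝ → ℝ≥0∞) (N : ℝ≥0∞) (κ : ℝ → ℝ → ℝ → ℝ≥0∞) (x y z : ℝ) : ℝ≥0∞ :=
  min (κ x y z) (N * weight y * φ z)

/-- The jump rate generated by the kernel `κ` and the size distribution `μ` of the partner. -/
def rate (κ : ℝ → ℝ → ℝ → ℝ≥0∞) (μ : Measure ℝ) (p : ℝ × ℝ) : ℝ≥0∞ := ∫⁻ y, κ p.1 y p.2 ∂μ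

theorem trunc_eq (hκ : IsQuadraticKernel φ κ) {x y z : ℝ} (hz : 0 < z) (hx : weight x ≤ N) :
    trunc φ N κ x y z = κ x y z :=
  min_eq_left ((hκ.le x y z hz).trans (by gcongr))

namespace IsQuadraticKernel

theorem trunc (hκ : IsQuadraticKernel φ κ) (N : ℝ≥0∞) : IsQuadraticKernel φ (trunc φ N κ) where
  measurable_profile := hκ.measurable_profile
  measurable := by
    have := hκ.measurable
    have := hκ.measurable_profile
    unfold CGEDG.trunc
    fun_prop
  vanish x y z hxz := nonpos_iff_eq_zero.1 ((min_le_left _ _).trans_eq (hκ.vanish x y z hxz))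
  le x y z hz := (min_le_left _ _).trans (hκ.le x y z hz)
  laplacian_le x y z hz := by
    rcases le_total (κ x y z) (N * weight y * φ z) with hle | hle
    · rw [CGEDG.trunc, CGEDG.trunc, CGEDG.trunc, min_eq_left hle]
      exact (add_le_add (min_le_left _ _) (min_le_left _ _)).trans (hκ.laplacian_le x y z hz)
    · rw [CGEDG.trunc, CGEDG.trunc, CGEDG.trunc, min_eq_right hle, two_mul]
      exact (add_le_add (min_le_right _ _) (min_le_right _ _)).trans le_self_add

theorem measurable_rate (hκ : IsQuadraticKernel φ κ) (μ : Measure ℝ) [SFinite μ] :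
    Measurable (rate κ μ) :=
  Measurable.lintegral_prod_right' (f := fun q : (ℝ × ℝ) × ℝ => κ q.1.1 q.2 q.1.2)
    (hκ.measurable.comp (f := fun q : (ℝ × ℝ) × ℝ => (q.1.1, q.2, q.1.2)) (by fun_prop))

theorem measurable_snd (hκ : IsQuadraticKernel φ κ) (x z : ℝ) : Measurable fun y => κ x y z :=
  hκ.measurable.comp (f := fun y : ℝ => (x, y, z)) (by fun_prop)

theorem rate_vanish (hκ : IsQuadraticKernel φ κ) (μ : Measure ℝ) {x z : ℝ} (hxz : x < z) :
    rate κ μ (x, z) = 0 := by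
  simp only [rate, hκ.vanish x _ z hxz, lintegral_zero]

theorem rate_le (hκ : IsQuadraticKernel φ κ) {μ : Measure ℝ} (hM : ∫⁻ x, weight x ∂μ ≤ M) (x : ℝ)
    {z : ℝ} (hz : 0 < z) : rate κ μ (x, z) ≤ weight x * M * φ z := by
  calc rate κ μ (x, z) ≤ ∫⁻ y, weight x * φ z * weight y ∂μ :=
        lintegral_mono fun y => (hκ.le x y z hz).trans_eq (by ring)
    _ = weight x * φ z * ∫⁻ y, weight y ∂μ := lintegral_const_mul _ measurable_weight
    _ ≤ weight x * φ z * M := by gcongr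
    _ = weight x * M * φ z := by ring

theorem rate_laplacian_le (hκ : IsQuadraticKernel φ κ) {μ : Measure ℝ}
    (hM : ∫⁻ x, weight x ∂μ ≤ M) (x : ℝ) {z : ℝ} (hz : 0 < z) :
    rate κ μ (x + z, z) + rate κ μ (x - z, z)
      ≤ 2 * rate κ μ (x, z) + M * (ENNReal.ofReal (z ^ 2) * φ z) := by
  have hm (x : ℝ) := hκ.measurable_snd x z
  calc rate κ μ (x + z, z) + rate κ μ (x - z, z)
      = ∫⁻ y, (κ (x + z) y z + κ (x - z) y z) ∂μ := (lintegral_add_left (hm _) _).symm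
    _ ≤ ∫⁻ y, (2 * κ x y z + weight y * (ENNReal.ofReal (z ^ 2) * φ z)) ∂μ :=
        lintegral_mono fun y => hκ.laplacian_le x y z hz
    _ = 2 * rate κ μ (x, z) + (∫⁻ y, weight y ∂μ) * (ENNReal.ofReal (z ^ 2) * φ z) := by
        rw [lintegral_add_left ((hm x).const_mul 2), lintegral_const_mul _ (hm x),
          lintegral_mul_const _ measurable_weight, rate]
    _ ≤ _ := by gcongr

theorem two_mul_jumpRate_trunc_le (hκ : IsQuadraticKernel φ κ) {μ : Measure ℝ}
    (hM : ∫⁻ x, weight x ∂μ ≤ M) (hcfl : 2 * h * (N * M * mass φ) ≤ 1) (x : ℝ) :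
    2 * h * jumpRate (rate (CGEDG.trunc φ N κ) μ) x ≤ 1 := by
  refine le_trans ?_ hcfl
  rw [mass, ← lintegral_const_mul _ hκ.measurable_profile]
  refine mul_le_mul' le_rfl (lintegral_mono fun z => ?_)
  calc rate (CGEDG.trunc φ N κ) μ (x, z) ≤ ∫⁻ y, N * φ z * weight y ∂μ :=
        lintegral_mono fun y => (min_le_right _ _).trans_eq (by ring)
    _ = N * φ z * ∫⁻ y, weight y ∂μ := lintegral_const_mul _ measurable_weight
    _ ≤ N * φ z * M := by gcongr
    _ = N * M * φ z := by ring

theorem isJumpRate_rate_trunc (hκ : IsQuadraticKernel φ κ) {μ : Measure ℝ} [SFinite μ]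
    (hM : ∫⁻ x, weight x ∂μ ≤ M) (hcfl : 2 * h * (N * M * mass φ) ≤ 1) :
    IsJumpRate φ M h (rate (CGEDG.trunc φ N κ) μ) where
  measurable := (hκ.trunc N).measurable_rate μ
  vanish _ _ _ hxz := (hκ.trunc N).rate_vanish μ hxz
  le x _ hz := (hκ.trunc N).rate_le hM x hz
  laplacian_le x _ hz := (hκ.trunc N).rate_laplacian_le hM x hz
  cfl := hκ.two_mul_jumpRate_trunc_le hM hcfl

end IsQuadraticKernel

end Kernel

section RealKernel

theorem checkm_rpow_two_le (x : ℝ) : checkm x ^ (2 : ℝ) ≤ 1 + x ^ 2 := by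
  rw [checkm, Real.rpow_two]
  rcases max_cases (1 : ℝ) x with ⟨hx, -⟩ | ⟨hx, -⟩ <;> rw [hx] <;> nlinarith [sq_nonneg x]

theorem checkm_rpow_two_pos (x : ℝ) : 0 < checkm x ^ (2 : ℝ) :=
  Real.rpow_pos_of_pos (one_pos.trans_le (le_max_left 1 x)) 2

theorem concaveOn_sub_sq_of_deriv2_le {k : ℝ → ℝ} {B : ℝ}
    (hk : ∀ x, 0 ≤ x → DifferentiableWithinAt ℝ k (Ici 0) x ∧
      DifferentiableWithinAt ℝ (derivWithin k (Ici 0)) (Ici 0) x ∧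
      derivWithin (derivWithin k (Ici 0)) (Ici 0) x ≤ B) :
    ConcaveOn ℝ (Ici 0) fun x => k x - B / 2 * x ^ 2 := by
  have hsub : interior (Ici (0 : ℝ)) ⊆ Ici 0 := interior_subset
  refine concaveOn_of_hasDerivWithinAt2_nonpos (f' := fun x => derivWithin k (Ici 0) x - B * x)
    (f'' := fun x => derivWithin (derivWithin k (Ici 0)) (Ici 0) x - B) (convex_Ici 0)
    (fun x hx => (hk x hx).1.continuousWithinAt.sub (by fun_prop)) (fun x hx => ?_)
    (fun x hx => ?_) fun x hx => sub_nonpos.2 (hk x (hsub hx)).2.2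
  · have hsq : HasDerivAt (fun x : ℝ => B / 2 * x ^ 2) (B * x) x :=
      ((hasDerivAt_pow 2 x).const_mul (B / 2)).congr_deriv (by norm_num; ring)
    exact ((hk x (hsub hx)).1.hasDerivWithinAt.mono hsub).sub hsq.hasDerivWithinAt
  · have hlin : HasDerivAt (fun x : ℝ => B * x) B x := by
      simpa only [mul_one, id] using (hasDerivAt_id x).const_mul B
    exact ((hk x (hsub hx)).2.1.hasDerivWithinAt.mono hsub).sub hlin.hasDerivWithinAt

theorem add_le_of_deriv2_le {k : ℝ → ℝ} {B : ℝ}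
    (hk : ∀ x, 0 ≤ x → DifferentiableWithinAt ℝ k (Ici 0) x ∧
      DifferentiableWithinAt ℝ (derivWithin k (Ici 0)) (Ici 0) x ∧
      derivWithin (derivWithin k (Ici 0)) (Ici 0) x ≤ B)
    {x z : ℝ} (hz : 0 ≤ z) (hzx : z ≤ x) : k (x + z) + k (x - z) ≤ 2 * k x + B * z ^ 2 := by
  have hmid := (concaveOn_sub_sq_of_deriv2_le hk).2
    (show x + z ∈ Ici (0 : ℝ) from add_nonneg (hz.trans hzx) hz)
    (show x - z ∈ Ici (0 : ℝ) from sub_nonneg.2 hzx)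
    (show (0 : ℝ) ≤ 1 / 2 by norm_num) (show (0 : ℝ) ≤ 1 / 2 by norm_num) (by norm_num)
  have hx : 1 / 2 * (x + z) + 1 / 2 * (x - z) = x := by ring
  simp only [smul_eq_mul, hx] at hmid
  nlinarith

variable {K : ℝ → ℝ → ℝ → ℝ} {φ : ℝ → ℝ}

theorem profile_nonneg (hK : ∀ x y z, 0 ≤ K x y z)
    (hbound : ∀ x y z : ℝ, 0 ≤ x → 0 ≤ y → 0 ≤ z →
      K x y z ≤ checkm x ^ (2 : ℝ) * checkm y ^ (2 : ℝ) * φ z) {z : ℝ} (hz : 0 ≤ z) : 0 ≤ φ z :=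
  nonneg_of_mul_nonneg_right ((hK 0 0 z).trans (hbound 0 0 z le_rfl le_rfl hz))
    (mul_pos (checkm_rpow_two_pos 0) (checkm_rpow_two_pos 0))

theorem _root_.IsKernel.vanish_right (hK : IsKernel K) {x y z : ℝ} (hyz : y < z) : K x y z = 0 :=
  (hK.symm x y z).trans (hK.vanish y x z hyz)

/-- By continuity from the left, where the kernel vanishes. -/
theorem _root_.IsKernel.diag_eq_zero (hK : IsKernel K) {y z : ℝ} (hz : 0 < z)
    (hcont : ContinuousWithinAt (fun x => K x y z) (Ici 0) z) : K z y z = 0 := by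
  have hlim : Tendsto (fun x => K x y z) (𝓝[<] z) (𝓝 (K z y z)) :=
    (hcont.continuousAt (Ici_mem_nhds hz)).tendsto.mono_left nhdsWithin_le_nhds
  refine tendsto_nhds_unique hlim (tendsto_const_nhds.congr' ?_)
  filter_upwards [self_mem_nhdsWithin] with x hx using (hK.vanish x y z hx).symm

theorem kernel_le (hK : IsKernel K)
    (hbound : ∀ x y z : ℝ, 0 ≤ x → 0 ≤ y → 0 ≤ z →
      K x y z ≤ checkm x ^ (2 : ℝ) * checkm y ^ (2 : ℝ) * φ z) (x y : ℝ) {z : ℝ} (hz : 0 < z) :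
    K x y z ≤ (1 + x ^ 2) * (1 + y ^ 2) * φ z := by
  have hφ := profile_nonneg hK.nonneg hbound hz.le
  rcases lt_or_ge x 0 with hx | hx
  · rw [hK.vanish x y z (hx.trans hz)]; positivity
  rcases lt_or_ge y 0 with hy | hy
  · rw [hK.vanish_right (hy.trans hz)]; positivity
  refine (hbound x y z hx hy hz.le).trans ?_
  have := (checkm_rpow_two_pos y).le
  gcongr <;> exact checkm_rpow_two_le _

theorem kernel_laplacian_le (hK : IsKernel K)
    (hbound : ∀ x y z : ℝ, 0 ≤ x → 0 ≤ y → 0 ≤ z →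
      K x y z ≤ checkm x ^ (2 : ℝ) * checkm y ^ (2 : ℝ) * φ z)
    (hderiv : SecondDerivBound K 0 2 φ) (x y : ℝ) {z : ℝ} (hz : 0 < z) :
    K (x + z) y z + K (x - z) y z ≤ 2 * K x y z + (1 + y ^ 2) * (z ^ 2 * φ z) := by
  have hφ := profile_nonneg hK.nonneg hbound hz.le
  have herr : 0 ≤ (1 + y ^ 2) * (z ^ 2 * φ z) := by positivity
  rcases lt_or_ge y 0 with hy | hy
  · simpa only [hK.vanish_right (hy.trans hz), mul_zero, zero_add] using herr
  rcases lt_or_ge x 0 with hx | hx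
  · rwa [hK.vanish (x + z) y z (by linarith), hK.vanish (x - z) y z (by linarith),
      hK.vanish x y z (by linarith), mul_zero, zero_add, zero_add]
  set B := hatm y ^ (-(0 : ℝ)) * checkm y ^ (2 : ℝ) * φ z with hB
  have hB_le : B ≤ (1 + y ^ 2) * φ z := by
    rw [hB, neg_zero, Real.rpow_zero, one_mul]
    gcongr
    exact checkm_rpow_two_le y
  have hd := hderiv y z hy hz.le
  rcases le_or_gt z x with hzx | hxz
  · have := add_le_of_deriv2_le hd hz.le hzx
    nlinarith [sq_nonneg z]
  -- Centred at `z` with increment `x`, the bound controls `K (z + x) y z`, as `K z y z = 0`.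
  · have hdiag := hK.diag_eq_zero hz (hd z hz.le).1.continuousWithinAt
    have hrefl := add_le_of_deriv2_le hd hx hxz.le
    have hsq : x ^ 2 ≤ z ^ 2 := pow_le_pow_left₀ hx hxz.le 2
    have hBx : B * x ^ 2 ≤ (1 + y ^ 2) * φ z * z ^ 2 := mul_le_mul hB_le hsq (sq_nonneg x)
      (by positivity)
    rw [hK.vanish x y z hxz, hK.vanish (x - z) y z (by linarith), add_comm x z]
    linarith [hK.nonneg (z - x) y z]

theorem isQuadraticKernel_ofReal (hK : IsKernel K) (hφ : Measurable φ)
    (hbound : ∀ x y z : ℝ, 0 ≤ x → 0 ≤ y → 0 ≤ z →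
      K x y z ≤ checkm x ^ (2 : ℝ) * checkm y ^ (2 : ℝ) * φ z)
    (hderiv : SecondDerivBound K 0 2 φ) :
    IsQuadraticKernel (fun z => ENNReal.ofReal (φ z)) fun x y z => ENNReal.ofReal (K x y z) where
  measurable_profile := hφ.ennreal_ofReal
  measurable := hK.meas.ennreal_ofReal
  vanish x y z hxz := by rw [hK.vanish x y z hxz, ENNReal.ofReal_zero]
  le x y z hz := by
    rw [weight, weight, ← ENNReal.ofReal_mul (by positivity), ← ENNReal.ofReal_mul (by positivity)]
    exact ENNReal.ofReal_le_ofReal (kernel_le hK hbound x y hz)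
  laplacian_le x y z hz := by
    have hφz := profile_nonneg hK.nonneg hbound hz.le
    rw [weight, ← ENNReal.ofReal_add (hK.nonneg _ _ _) (hK.nonneg _ _ _), ← ENNReal.ofReal_ofNat 2,
      ← ENNReal.ofReal_mul zero_le_two, ← ENNReal.ofReal_mul (sq_nonneg z),
      ← ENNReal.ofReal_mul (by positivity), ← ENNReal.ofReal_add
        (mul_nonneg zero_le_two (hK.nonneg _ _ _)) (by positivity)]
    exact ENNReal.ofReal_le_ofReal (kernel_laplacian_le hK hbound hderiv x y hz)

end RealKernel

/-! ### Euler schemes with prescribed rates -/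

section Iteration

variable {φ : ℝ → ℝ≥0∞} {M h T : ℝ≥0∞} {k : ℕ → ℝ × ℝ → ℝ≥0∞} {ρ : Measure ℝ} {f : ℝ → ℝ≥0∞}
  {j : ℕ}

/-- The Euler scheme for prescribed jump rates `k 0, k 1, …`. -/
def eulerIter (h : ℝ≥0∞) (k : ℕ → ℝ × ℝ → ℝ≥0∞) (ρ : Measure ℝ) : ℕ → Measure ℝ
  | 0 => ρ
  | j + 1 => eulerStep h (k j) (eulerIter h k ρ j)

instance (h : ℝ≥0∞) (k : ℕ → ℝ × ℝ → ℝ≥0∞) (ρ : Measure ℝ) [SFinite ρ] (j : ℕ) :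
    SFinite (eulerIter h k ρ j) := by
  induction j with
  | zero => assumption
  | succ j _ => exact inferInstanceAs (SFinite (eulerStep ..))

theorem eulerIter_add (hk : ∀ i < j, Measurable (k i)) (ρ ρ' : Measure ℝ) [SFinite ρ] [SFinite ρ'] :
    eulerIter h k (ρ + ρ') j = eulerIter h k ρ j + eulerIter h k ρ' j := by
  induction j with
  | zero => rfl
  | succ j ih =>
    rw [eulerIter, ih fun i hi => hk i (hi.trans j.lt_succ_self),
      eulerStep_add h (hk j j.lt_succ_self), eulerIter, eulerIter]

variable [SFinite ρ]

theorem lintegral_eulerIter_le (hφ : Measurable φ) (hk : ∀ i < j, IsJumpRate φ M h (k i))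
    (hf : Measurable f) {C : ℝ≥0∞}
    (hfC : ∀ x z, 0 < z → z ≤ x →
      f (x + z) + f (x - z) ≤ 2 * f x + C * ENNReal.ofReal (z ^ 2) * (f x / weight x)) :
    ∫⁻ x, f x ∂eulerIter h k ρ j ≤ (1 + h * (C * M * secondMoment φ)) ^ j * ∫⁻ x, f x ∂ρ := by
  induction j with
  | zero => simp only [eulerIter, pow_zero, one_mul, le_refl]
  | succ j ih =>
    rw [pow_succ', mul_assoc]
    exact ((hk j j.lt_succ_self).lintegral_eulerStep_le hφ _ hf hfC).trans
      (mul_le_mul' le_rfl (ih fun i hi => hk i (hi.trans j.lt_succ_self)))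

theorem lintegral_eulerIter_eq (hk : ∀ i < j, IsJumpRate φ M h (k i)) (hfm : Measurable f)
    (hf : ∀ x z, 0 < z → z ≤ x → f (x + z) + f (x - z) = 2 * f x) :
    ∫⁻ x, f x ∂eulerIter h k ρ j = ∫⁻ x, f x ∂ρ := by
  induction j with
  | zero => rfl
  | succ j ih =>
    exact ((hk j j.lt_succ_self).lintegral_eulerStep_eq _ hfm hf).trans
      (ih fun i hi => hk i (hi.trans j.lt_succ_self))

theorem eulerIter_Iio_zero (hk : ∀ i < j, IsJumpRate φ M h (k i)) (hρ : ρ (Iio 0) = 0) :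
    eulerIter h k ρ j (Iio 0) = 0 := by
  induction j with
  | zero => exact hρ
  | succ j ih =>
    exact (hk j j.lt_succ_self).eulerStep_Iio_zero _
      (ih fun i hi => hk i (hi.trans j.lt_succ_self))

theorem eulerIter_le_volume (hφ : Measurable φ) (hk : ∀ i < j, IsJumpRate φ M h (k i)) {L : ℝ≥0∞}
    (hρ : ρ ≤ L • volume) :
    eulerIter h k ρ j ≤ ((1 + h * (M * secondMoment φ)) ^ j * L) • volume := by
  induction j with
  | zero => simpa only [eulerIter, pow_zero, one_mul]
  | succ j ih =>
    rw [pow_succ', mul_assoc]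
    exact (hk j j.lt_succ_self).eulerStep_le_volume hφ _
      (ih fun i hi => hk i (hi.trans j.lt_succ_self))

end Iteration

section Equiintegrability

variable {φ d : ℝ → ℝ≥0∞} {M h T : ℝ≥0∞} {k : ℕ → ℝ × ℝ → ℝ≥0∞} {ρ : Measure ℝ} {j : ℕ}

theorem one_add_mul_pow_le_exp {c : ℝ≥0∞} (hc : c ≠ ∞) (hT : T ≠ ∞) (hj : j * h ≤ T) :
    (1 + h * c) ^ j ≤ ENNReal.ofReal (Real.exp (T * c).toReal) := by
  rcases eq_or_ne j 0 with rfl | hj0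
  · rw [pow_zero, ENNReal.one_le_ofReal]
    exact Real.one_le_exp ENNReal.toReal_nonneg
  have hh : h ≠ ∞ := by
    rintro rfl
    rw [ENNReal.mul_top (by exact_mod_cast hj0)] at hj
    exact hT (top_le_iff.1 hj)
  have base_le : 1 + h * c ≤ ENNReal.ofReal (Real.exp (h * c).toReal) := by
    rw [← ENNReal.ofReal_toReal (a := 1 + h * c) (by finiteness),
      ENNReal.toReal_add ENNReal.one_ne_top (by finiteness), ENNReal.toReal_one, add_comm]
    exact ENNReal.ofReal_le_ofReal (Real.add_one_le_exp _)
  refine (pow_le_pow_left' base_le j).trans ?_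
  rw [← ENNReal.ofReal_pow (Real.exp_pos _).le, ← Real.exp_nat_mul, ← ENNReal.toReal_natCast,
    ← ENNReal.toReal_mul, ← mul_assoc]
  gcongr
  finiteness

theorem weight_laplacian_le (x z : ℝ) :
    weight (x + z) + weight (x - z) ≤
      2 * weight x + 2 * ENNReal.ofReal (z ^ 2) * (weight x / weight x) := by
  rw [ENNReal.div_self (weight_ne_zero x) (weight_ne_top x), mul_one, ← mul_add, weight, weight,
    weight, ← ENNReal.ofReal_add (by positivity) (by positivity), ← ENNReal.ofReal_ofNat 2,
    ← ENNReal.ofReal_add (by positivity) (by positivity), ← ENNReal.ofReal_mul (by positivity)]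
  exact ENNReal.ofReal_le_ofReal (by linarith [sq_nonneg x])

theorem weight_sq_laplacian_le {x z : ℝ} (hz : 0 < z) (hzx : z ≤ x) :
    weight (x + z) ^ 2 + weight (x - z) ^ 2 ≤
      2 * weight x ^ 2 + 14 * ENNReal.ofReal (z ^ 2) * (weight x ^ 2 / weight x) := by
  have weight_sq_div : weight x ^ 2 / weight x = weight x := by
    rw [sq, ENNReal.mul_div_cancel_right (weight_ne_zero x) (weight_ne_top x)]
  rw [weight_sq_div]
  unfold weight
  rw [← ENNReal.ofReal_pow (by positivity), ← ENNReal.ofReal_pow (by positivity),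
    ← ENNReal.ofReal_pow (by positivity), ← ENNReal.ofReal_add (by positivity) (by positivity),
    ← ENNReal.ofReal_ofNat 2, ← ENNReal.ofReal_ofNat 14, ← ENNReal.ofReal_mul (by positivity),
    ← ENNReal.ofReal_mul (by positivity), ← ENNReal.ofReal_mul (by positivity),
    ← ENNReal.ofReal_add (by positivity) (by positivity)]
  have hsq : z ^ 2 ≤ x ^ 2 := by gcongr
  refine ENNReal.ofReal_le_ofReal ?_
  nlinarith [mul_le_mul_of_nonneg_left hsq (sq_nonneg z), sq_nonneg z]

theorem weight_le_add (x : ℝ) (δ : ℝ≥0∞) :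
    weight x ≤ δ * weight x ^ 2 + δ⁻¹ * δ⁻¹ * (weight x)⁻¹ := by
  rcases le_total 1 (δ * weight x) with hδ | hδ
  · calc weight x = 1 * weight x := (one_mul _).symm
      _ ≤ δ * weight x * weight x := by gcongr
      _ = δ * weight x ^ 2 := by ring
      _ ≤ _ := le_self_add
  · have weight_le_inv : weight x ≤ δ⁻¹ := by rwa [ENNReal.le_inv_iff_mul_le, mul_comm]
    calc weight x = weight x * weight x * (weight x)⁻¹ := by
          rw [mul_assoc, ENNReal.mul_inv_cancel (weight_ne_zero x) (weight_ne_top x), mul_one]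
      _ ≤ δ⁻¹ * δ⁻¹ * (weight x)⁻¹ := by gcongr
      _ ≤ _ := le_add_self

/-- The finite reference measure `(1 + x²)⁻¹ dx` against which equi-integrability is measured. -/
def referenceMeasure : Measure ℝ := volume.withDensity fun x => (weight x)⁻¹

instance : IsFiniteMeasure referenceMeasure := by
  refine isFiniteMeasure_withDensity (ne_of_lt ?_)
  have inv_eq (x : ℝ) : (weight x)⁻¹ = ENNReal.ofReal (1 + x ^ 2)⁻¹ := by
    rw [weight, ENNReal.ofReal_inv_of_pos (by positivity)]
  simp only [inv_eq]
  exact integrable_inv_one_add_sq.lintegral_lt_top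

/-- Bounds the growth over `[0, T]` of moments of order at most four under the Euler scheme. -/
def growthConst (φ : ℝ → ℝ≥0∞) (M T : ℝ≥0∞) : ℝ≥0∞ :=
  ENNReal.ofReal (Real.exp (T * (14 * M * secondMoment φ)).toReal)

section Growth

variable [SFinite ρ] (hφ : Measurable φ) (hΦ : secondMoment φ ≠ ∞) (hM : M ≠ ∞) (hT : T ≠ ∞)
  (hk : ∀ i < j, IsJumpRate φ M h (k i)) (hj : j * h ≤ T)

include hφ hΦ hM hT hk hj

theorem lintegral_weight_eulerIter_le :
    ∫⁻ x, weight x ∂eulerIter h k ρ j ≤ growthConst φ M T * ∫⁻ x, weight x ∂ρ := by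
  refine (lintegral_eulerIter_le hφ hk measurable_weight (C := 14) fun x z _ _ =>
    (weight_laplacian_le x z).trans ?_).trans
      (mul_le_mul' (one_add_mul_pow_le_exp (by finiteness) hT hj) le_rfl)
  gcongr
  norm_num

theorem lintegral_weight_sq_eulerIter_le :
    ∫⁻ x, weight x ^ 2 ∂eulerIter h k ρ j ≤ growthConst φ M T * ∫⁻ x, weight x ^ 2 ∂ρ :=
  (lintegral_eulerIter_le hφ hk (by fun_prop) fun _ _ => weight_sq_laplacian_le).trans
    (mul_le_mul' (one_add_mul_pow_le_exp (by finiteness) hT hj) le_rfl)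

theorem eulerIter_le_growthConst_volume {L : ℝ≥0∞} (hρ : ρ ≤ L • volume) :
    eulerIter h k ρ j ≤ (growthConst φ M T * L) • volume := by
  refine (eulerIter_le_volume hφ hk hρ).trans (Measure.le_iff.2 fun A _ => ?_)
  simp only [Measure.smul_apply, smul_eq_mul]
  gcongr
  refine le_trans ?_ (one_add_mul_pow_le_exp (by finiteness) hT hj)
  gcongr
  exact le_mul_of_one_le_left' (by norm_num)

theorem setLIntegral_weight_eulerIter_le {L : ℝ≥0∞} (hρ : ρ ≤ L • volume) (δ : ℝ≥0∞) {A : Set ℝ}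
    (hA : MeasurableSet A) :
    ∫⁻ x in A, weight x ∂eulerIter h k ρ j ≤ δ * (growthConst φ M T * ∫⁻ x, weight x ^ 2 ∂ρ)
      + δ⁻¹ * δ⁻¹ * (growthConst φ M T * L) * referenceMeasure A := by
  have inv_le : ∫⁻ x in A, (weight x)⁻¹ ∂eulerIter h k ρ j
      ≤ growthConst φ M T * L * referenceMeasure A := by
    rw [referenceMeasure, withDensity_apply _ hA, ← smul_eq_mul, ← lintegral_smul_measure,
      ← Measure.restrict_smul]
    exact lintegral_mono' (Measure.restrict_mono le_rfl
      (eulerIter_le_growthConst_volume hφ hΦ hM hT hk hj hρ)) le_rfl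
  calc ∫⁻ x in A, weight x ∂eulerIter h k ρ j
      ≤ ∫⁻ x in A, (δ * weight x ^ 2 + δ⁻¹ * δ⁻¹ * (weight x)⁻¹) ∂eulerIter h k ρ j :=
        lintegral_mono fun x => weight_le_add x δ
    _ = δ * ∫⁻ x in A, weight x ^ 2 ∂eulerIter h k ρ j
        + δ⁻¹ * δ⁻¹ * ∫⁻ x in A, (weight x)⁻¹ ∂eulerIter h k ρ j := by
        rw [lintegral_add_left (by fun_prop), lintegral_const_mul _ (by fun_prop),
          lintegral_const_mul _ (by fun_prop)]
    _ ≤ _ := by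
        rw [mul_assoc (δ⁻¹ * δ⁻¹)]
        gcongr
        exact (setLIntegral_le_lintegral _ _).trans
          (lintegral_weight_sq_eulerIter_le hφ hΦ hM hT hk hj)

end Growth

theorem eventually_le_natCast {a : ℝ≥0∞} (ha : a ≠ ∞) : ∀ᶠ n : ℕ in atTop, a ≤ n :=
  ENNReal.tendsto_nat_nhds_top.eventually_const_le ha.lt_top

theorem exists_restrict_le_volume (hd : Measurable d) (hd_top : ∀ x, d x ≠ ∞)
    (hw : ∫⁻ x, weight x ∂halfLine.withDensity d ≠ ∞) {ε : ℝ≥0∞} (hε : ε ≠ 0) :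
    ∃ (n : ℕ) (E : Set ℝ), MeasurableSet E ∧ (∀ x ∈ E, weight x ≤ n) ∧
      (halfLine.withDensity d).restrict E ≤ (n : ℝ≥0∞) • volume ∧
      ∫⁻ x in Eᶜ, weight x ∂halfLine.withDensity d ≤ ε := by
  set ρ := halfLine.withDensity d
  set E : ℕ → Set ℝ := fun n => {x | weight x ≤ n ∧ d x ≤ n}
  have meas_E (n : ℕ) : MeasurableSet (E n) :=
    (measurableSet_le measurable_weight measurable_const).inter
      (measurableSet_le hd measurable_const)
  have tail : Tendsto (fun n => ∫⁻ x in (E n)ᶜ, weight x ∂ρ) atTop (𝓝 0) := by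
    have := isFiniteMeasure_withDensity hw
    have mem_E (x : ℝ) : ∀ᶠ n : ℕ in atTop, x ∈ (E n)ᶜ ↔ x ∈ (∅ : Set ℝ) := by
      filter_upwards [eventually_le_natCast (weight_ne_top x),
        eventually_le_natCast (hd_top x)] with n hn hn'
      exact iff_of_false (not_not.2 ⟨hn, hn'⟩) (notMem_empty x)
    simpa only [withDensity_apply _ (meas_E _).compl, measure_empty] using
      tendsto_measure_of_tendsto_indicator_of_isFiniteMeasure atTop (ρ.withDensity weight)
        (fun n => (meas_E n).compl) mem_E
  obtain ⟨n, hn⟩ := (tail.eventually_le_const (pos_iff_ne_zero.2 hε)).exists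
  refine ⟨n, E n, meas_E n, fun x hx => hx.1, Measure.le_iff.2 fun B hB => ?_, hn⟩
  calc ρ.restrict (E n) B = ∫⁻ x in B ∩ E n, d x ∂halfLine := by
        rw [Measure.restrict_apply hB, withDensity_apply _ (hB.inter (meas_E n))]
    _ ≤ ∫⁻ _ in B ∩ E n, n ∂halfLine := setLIntegral_mono measurable_const fun x hx => hx.2.2
    _ = n * halfLine (B ∩ E n) := setLIntegral_const _ _
    _ ≤ n * volume B :=
        mul_le_mul' le_rfl
          ((Measure.restrict_apply_le _ _).trans (measure_mono inter_subset_left))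

/-- The steps of all Euler schemes up to time `T` whose rates satisfy `IsJumpRate φ M`, as triples
of the step size, the rates and the number of steps. -/
def AdmissibleIter (φ : ℝ → ℝ≥0∞) (M T : ℝ≥0∞) : Type :=
  {i : ℝ≥0∞ × (ℕ → ℝ × ℝ → ℝ≥0∞) × ℕ //
    (∀ l < i.2.2, IsJumpRate φ M i.1 (i.2.1 l)) ∧ i.2.2 * i.1 ≤ T}

-- The scheme is linear in the initial measure: start it separately from a part with bounded density
-- and four moments, both of which it propagates, and from a remainder of small second moment.
theorem unifAbsCont_eulerIter (hφ : Measurable φ) (hΦ : secondMoment φ ≠ ∞) (hM : M ≠ ∞)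
    (hT : T ≠ ∞) (hd : Measurable d) (hd_top : ∀ x, d x ≠ ∞)
    (hw : ∫⁻ x, weight x ∂halfLine.withDensity d ≠ ∞) :
    UnifAbsCont referenceMeasure fun i : AdmissibleIter φ M T =>
      (eulerIter i.1.1 i.1.2.1 (halfLine.withDensity d) i.1.2.2).withDensity weight := by
  intro ε hε
  set ρ := halfLine.withDensity d
  set G := growthConst φ M T
  have hG : G ≠ ∞ := ENNReal.ofReal_ne_top
  obtain ⟨η, hη, hGη⟩ := ENNReal.exists_nnreal_pos_mul_lt hG (ENNReal.half_pos hε).ne'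
  obtain ⟨n, E, hE, weight_le, restrict_le, tail_le⟩ :=
    exists_restrict_le_volume hd hd_top hw (ε := η) (by exact_mod_cast hη.ne')
  have sq_le : ∫⁻ x in E, weight x ^ 2 ∂ρ ≤ n * ∫⁻ x, weight x ∂ρ := by
    rw [← lintegral_const_mul _ measurable_weight]
    refine (setLIntegral_mono (by fun_prop) fun x hx => ?_).trans (setLIntegral_le_lintegral E _)
    rw [sq]
    exact mul_le_mul' (weight_le x hx) le_rfl
  obtain ⟨δ, hδ, hδG⟩ := ENNReal.exists_nnreal_pos_mul_lt
    (a := G * (n * ∫⁻ x, weight x ∂ρ)) (by finiteness) (ENNReal.half_pos hε).ne'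
  have hδ0 : (δ : ℝ≥0∞) ≠ 0 := by exact_mod_cast hδ.ne'
  refine ⟨(δ : ℝ≥0∞)⁻¹ * (δ : ℝ≥0∞)⁻¹ * (G * n), by finiteness, fun ⟨⟨h, k, j⟩, hk, hj⟩ A hA => ?_⟩
  rw [withDensity_apply _ hA, ← Measure.restrict_add_restrict_compl (μ := ρ) hE,
    eulerIter_add fun i hi => (hk i hi).measurable, Measure.restrict_add, lintegral_add_measure]
  calc _ ≤ (δ * (G * ∫⁻ x in E, weight x ^ 2 ∂ρ)
          + (δ : ℝ≥0∞)⁻¹ * (δ : ℝ≥0∞)⁻¹ * (G * n) * referenceMeasure A)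
        + G * ∫⁻ x in Eᶜ, weight x ∂ρ :=
        add_le_add (setLIntegral_weight_eulerIter_le hφ hΦ hM hT hk hj restrict_le δ hA)
          ((setLIntegral_le_lintegral _ _).trans
            (lintegral_weight_eulerIter_le hφ hΦ hM hT hk hj))
    _ ≤ (ε / 2 + (δ : ℝ≥0∞)⁻¹ * (δ : ℝ≥0∞)⁻¹ * (G * n) * referenceMeasure A) + ε / 2 := by
        gcongr
        · exact (mul_le_mul' le_rfl (mul_le_mul' le_rfl sq_le)).trans hδG.le
        · exact (mul_le_mul' le_rfl tail_le).trans ((mul_comm _ _).trans_le hGη.le)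
    _ = _ := by rw [add_right_comm, ENNReal.add_halves]

end Equiintegrability

/-! ### The nonlinear Euler scheme -/

section JumpBounds

variable {φ f g : ℝ → ℝ≥0∞} {M R : ℝ≥0∞} {k : ℝ × ℝ → ℝ≥0∞}

theorem lintegral_jump_mul_le (hφ : Measurable φ)
    (hk : ∀ x z, 0 < z → k (x, z) ≤ weight x * M * φ z) (hg : ∀ z, g z ≤ 2 * R) (x : ℝ) :
    ∫⁻ z, k (x, z) * g z ∂halfLine ≤ 2 * R * (M * mass φ) * weight x := by
  calc ∫⁻ z, k (x, z) * g z ∂halfLine ≤ ∫⁻ z, weight x * M * (2 * R) * φ z ∂halfLine :=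
        lintegral_mono_ae (ae_halfLine fun z hz =>
          (mul_le_mul' (hk x z hz) (hg z)).trans_eq (by ring))
    _ = weight x * M * (2 * R) * mass φ := lintegral_const_mul _ hφ
    _ = 2 * R * (M * mass φ) * weight x := by ring

theorem gain_le_weight (hφ : Measurable φ)
    (hk : ∀ x z, 0 < z → k (x, z) ≤ weight x * M * φ z) (hf : ∀ x, f x ≤ R) (x : ℝ) :
    gain k f x ≤ 2 * R * (M * mass φ) * weight x :=
  lintegral_jump_mul_le hφ hk (fun _ => (add_le_add (hf _) (hf _)).trans_eq (two_mul R).symm) x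

theorem loss_le_weight (hφ : Measurable φ)
    (hk : ∀ x z, 0 < z → k (x, z) ≤ weight x * M * φ z) (hf : ∀ x, f x ≤ R) (x : ℝ) :
    loss k f x ≤ 2 * R * (M * mass φ) * weight x :=
  lintegral_jump_mul_le hφ hk (fun _ => mul_le_mul' le_rfl (hf x)) x

end JumpBounds

section Riccati

variable {φ : ℝ → ℝ≥0∞} {a b c S s t : ℝ≥0∞}

/-- The solution of the Riccati equation `S' = 2 Φ₂ S²`, `S(0) = a⁻¹`, where `Φ₂` is the second
moment of `φ`; it is `∞` from the blow-up time onwards. -/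
def riccati (φ : ℝ → ℝ≥0∞) (a t : ℝ≥0∞) : ℝ≥0∞ := (a - 2 * secondMoment φ * t)⁻¹

theorem riccati_mono (hst : s ≤ t) : riccati φ a s ≤ riccati φ a t := by
  unfold riccati
  gcongr

theorem one_add_mul_mul_le_inv_tsub (hS : S ≤ b⁻¹) : (1 + c * S) * S ≤ (b - c)⁻¹ := by
  rw [ENNReal.le_inv_iff_mul_le]
  rw [ENNReal.le_inv_iff_mul_le] at hS
  have mul_tsub_le : S * (b - c) ≤ 1 - c * S := by
    rcases eq_or_ne S ∞ with rfl | hS_top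
    · have hb : b = 0 := by
        by_contra hb
        rw [ENNReal.top_mul hb] at hS
        exact ENNReal.one_ne_top (top_le_iff.1 hS)
      simp only [hb, zero_tsub, mul_zero, zero_le]
    · rw [ENNReal.mul_sub fun _ _ => hS_top, mul_comm S c]
      gcongr
  calc (1 + c * S) * S * (b - c) ≤ (1 + c * S) * (1 - c * S) := by
        rw [mul_assoc]
        gcongr
    _ = (1 - c * S) + c * S * (1 - c * S) := by ring
    _ ≤ 1 := by
        rcases le_total (c * S) 1 with hcS | hcS
        · calc (1 - c * S) + c * S * (1 - c * S) ≤ (1 - c * S) + c * S := by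
                exact add_le_add le_rfl (mul_le_of_le_one_right zero_le tsub_le_self)
            _ = 1 := tsub_add_cancel_of_le hcS
        · simp only [tsub_eq_zero_of_le hcS, mul_zero, add_zero, zero_le]

end Riccati

section Scheme

variable {φ f : ℝ → ℝ≥0∞} {κ : ℝ → ℝ → ℝ → ℝ≥0∞} {N h a T R : ℝ≥0∞} {ρ : Measure ℝ} {i j J : ℕ}

/-- The Euler scheme for the truncated kernel, whose jump rates are generated by the current
measure. -/
def euler (φ : ℝ → ℝ≥0∞) (N h : ℝ≥0∞) (κ : ℝ → ℝ → ℝ → ℝ≥0∞) (ρ : Measure ℝ) : ℕ → Measure ℝ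
  | 0 => ρ
  | j + 1 => eulerStep h (rate (trunc φ N κ) (euler φ N h κ ρ j)) (euler φ N h κ ρ j)

/-- The jump rates of the `j`-th step of the scheme `euler`. -/
def eulerRate (φ : ℝ → ℝ≥0∞) (N h : ℝ≥0∞) (κ : ℝ → ℝ → ℝ → ℝ≥0∞) (ρ : Measure ℝ) (j : ℕ) :
    ℝ × ℝ → ℝ≥0∞ := rate (trunc φ N κ) (euler φ N h κ ρ j)

instance [SFinite ρ] : SFinite (euler φ N h κ ρ j) := by
  induction j with
  | zero => assumption
  | succ j _ => exact inferInstanceAs (SFinite (eulerStep ..))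

theorem euler_eq_eulerIter :
    euler φ N h κ ρ j = eulerIter h (eulerRate φ N h κ ρ) ρ j := by
  induction j with
  | zero => rfl
  | succ j ih => rw [euler, eulerIter, ← ih, eulerRate]

variable [SFinite ρ] (hκ : IsQuadraticKernel φ κ) (hρ : ∫⁻ x, weight x ∂ρ ≤ a⁻¹)
  (hcfl : 2 * h * (N * riccati φ a T * mass φ) ≤ 1)

include hκ hρ hcfl

theorem lintegral_weight_euler_le (hj : j * h ≤ T) :
    ∫⁻ x, weight x ∂euler φ N h κ ρ j ≤ riccati φ a (j * h) := by
  induction j with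
  | zero => simpa only [euler, riccati, Nat.cast_zero, zero_mul, mul_zero, tsub_zero]
  | succ j ih =>
    have hj' : j * h ≤ T := le_trans (by gcongr; exact j.le_succ) hj
    have hS := ih hj'
    have hk : IsJumpRate φ (∫⁻ x, weight x ∂euler φ N h κ ρ j) h (eulerRate φ N h κ ρ j) :=
      hκ.isJumpRate_rate_trunc le_rfl (le_trans (by gcongr; exact hS.trans (riccati_mono hj')) hcfl)
    calc ∫⁻ x, weight x ∂euler φ N h κ ρ (j + 1)
        ≤ (1 + h * (2 * (∫⁻ x, weight x ∂euler φ N h κ ρ j) * secondMoment φ))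
            * ∫⁻ x, weight x ∂euler φ N h κ ρ j :=
          hk.lintegral_eulerStep_le hκ.measurable_profile _ measurable_weight
            fun x z _ _ => weight_laplacian_le x z
      _ = (1 + 2 * secondMoment φ * h * ∫⁻ x, weight x ∂euler φ N h κ ρ j)
            * ∫⁻ x, weight x ∂euler φ N h κ ρ j := by ring
      _ ≤ (a - 2 * secondMoment φ * (j * h) - 2 * secondMoment φ * h)⁻¹ :=
          one_add_mul_mul_le_inv_tsub hS
      _ = riccati φ a ((j + 1 : ℕ) * h) := by
          rw [tsub_tsub, ← mul_add, Nat.cast_succ, add_one_mul]; rfl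

theorem isJumpRate_eulerRate (hj : j * h ≤ T) :
    IsJumpRate φ (riccati φ a T) h (eulerRate φ N h κ ρ j) :=
  hκ.isJumpRate_rate_trunc
    ((lintegral_weight_euler_le hκ hρ hcfl hj).trans (riccati_mono hj)) hcfl

theorem isJumpRate_eulerRate_of_lt (hJ : J * h ≤ T) :
    ∀ j < J, IsJumpRate φ (riccati φ a T) h (eulerRate φ N h κ ρ j) := fun _ hj =>
  isJumpRate_eulerRate hκ hρ hcfl (le_trans (by gcongr) hJ)

theorem lintegral_euler_eq (hj : j * h ≤ T) (hfm : Measurable f)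
    (hf : ∀ x z, 0 < z → z ≤ x → f (x + z) + f (x - z) = 2 * f x) :
    ∫⁻ x, f x ∂euler φ N h κ ρ j = ∫⁻ x, f x ∂ρ := by
  rw [euler_eq_eulerIter]
  exact lintegral_eulerIter_eq (isJumpRate_eulerRate_of_lt hκ hρ hcfl hj) hfm hf

theorem euler_Iio_zero (hj : j * h ≤ T) (hρ0 : ρ (Iio 0) = 0) :
    euler φ N h κ ρ j (Iio 0) = 0 := by
  rw [euler_eq_eulerIter]
  exact eulerIter_Iio_zero (isJumpRate_eulerRate_of_lt hκ hρ hcfl hj) hρ0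

theorem lintegral_euler_add_sum_loss (hJ : J * h ≤ T) (hf : Measurable f) :
    ∫⁻ x, f x ∂euler φ N h κ ρ J
        + ∑ j ∈ Finset.range J, h * ∫⁻ x, loss (eulerRate φ N h κ ρ j) f x ∂euler φ N h κ ρ j
      = ∫⁻ x, f x ∂ρ
        + ∑ j ∈ Finset.range J, h * ∫⁻ x, gain (eulerRate φ N h κ ρ j) f x ∂euler φ N h κ ρ j := by
  induction J with
  | zero => rfl
  | succ J ih =>
    have hJ' : J * h ≤ T := le_trans (by gcongr; exact J.le_succ) hJ
    have step := (isJumpRate_eulerRate hκ hρ hcfl hJ').lintegral_eulerStep_add_loss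
      (euler φ N h κ ρ J) hf
    rw [Finset.sum_range_succ, Finset.sum_range_succ, ← add_assoc _ _ (h * _),
      ← add_assoc _ _ (h * _), ← ih hJ', add_right_comm, euler]
    rw [eulerRate] at step ⊢
    rw [step, add_right_comm]

theorem lintegral_euler_step_le (hR : ∀ x, f x ≤ R) (hf : Measurable f) (hj : j * h ≤ T) :
    ∫⁻ x, f x ∂euler φ N h κ ρ (j + 1) ≤ ∫⁻ x, f x ∂euler φ N h κ ρ j
        + h * (2 * R * (riccati φ a T * mass φ) * riccati φ a T) ∧
    ∫⁻ x, f x ∂euler φ N h κ ρ j ≤ ∫⁻ x, f x ∂euler φ N h κ ρ (j + 1)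
        + h * (2 * R * (riccati φ a T * mass φ) * riccati φ a T) := by
  have hk := isJumpRate_eulerRate hκ hρ hcfl hj
  have step := hk.lintegral_eulerStep_add_loss (euler φ N h κ ρ j) hf
  have lintegral_le {g : ℝ → ℝ≥0∞}
      (hg : ∀ x, g x ≤ 2 * R * (riccati φ a T * mass φ) * weight x) :
      ∫⁻ x, g x ∂euler φ N h κ ρ j ≤ 2 * R * (riccati φ a T * mass φ) * riccati φ a T := by
    refine (lintegral_mono hg).trans ?_
    rw [lintegral_const_mul _ measurable_weight]
    gcongr
    exact (lintegral_weight_euler_le hκ hρ hcfl hj).trans (riccati_mono hj)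
  constructor
  · calc _ ≤ _ := le_self_add.trans_eq step
      _ ≤ _ := by
        gcongr
        exact lintegral_le (gain_le_weight hκ.measurable_profile hk.le hR)
  · calc _ ≤ _ := le_self_add.trans_eq step.symm
      _ ≤ _ := by
        gcongr
        · rfl
        · exact lintegral_le (loss_le_weight hκ.measurable_profile hk.le hR)

end Scheme

section Curve

theorem le_add_and_le_add_of_step {u : ℕ → ℝ≥0∞} {c : ℝ≥0∞} {J : ℕ}
    (step : ∀ i < J, u (i + 1) ≤ u i + c ∧ u i ≤ u (i + 1) + c) (i d : ℕ) (hd : i + d ≤ J) :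
    u (i + d) ≤ u i + d * c ∧ u i ≤ u (i + d) + d * c := by
  induction d with
  | zero => simp only [add_zero, Nat.cast_zero, zero_mul, le_refl, and_self]
  | succ d ih =>
    obtain ⟨up, down⟩ := step (i + d) (by omega)
    obtain ⟨ih_up, ih_down⟩ := ih (by omega)
    rw [Nat.cast_succ, add_one_mul, ← add_assoc i d 1, ← add_assoc]
    exact ⟨up.trans (add_le_add ih_up le_rfl),
      ih_down.trans ((add_le_add down le_rfl).trans_eq (by ring))⟩

theorem natFloor_div_mul_le {h : ℝ} (hh : 0 < h) (t : ℝ) :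
    (⌊t / h⌋₊ : ℝ≥0∞) * ENNReal.ofReal h ≤ ENNReal.ofReal t := by
  rw [← ENNReal.ofReal_natCast, ← ENNReal.ofReal_mul (by positivity)]
  rcases le_total 0 t with ht | ht
  · exact ENNReal.ofReal_le_ofReal
      ((le_div_iff₀ hh).1 (Nat.floor_le (div_nonneg ht hh.le)))
  · simp only [Nat.floor_of_nonpos (div_nonpos_of_nonpos_of_nonneg ht hh.le), Nat.cast_zero,
      zero_mul, ENNReal.ofReal_zero, zero_le]

theorem natFloor_div_sub_mul_le {h : ℝ} (hh : 0 < h) {s t : ℝ} (hst : s ≤ t) :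
    ((⌊t / h⌋₊ - ⌊s / h⌋₊ : ℕ) : ℝ≥0∞) * ENNReal.ofReal h ≤ ENNReal.ofReal (t - s + h) := by
  have floor_le : (⌊t / h⌋₊ : ℝ) ≤ ⌊s / h⌋₊ + ((t - s) / h + 1) := by
    rcases le_total 0 t with ht | ht
    · have := Nat.floor_le (div_nonneg ht hh.le)
      have := Nat.lt_floor_add_one (s / h)
      rw [sub_div]
      linarith
    · rw [Nat.floor_of_nonpos (div_nonpos_of_nonpos_of_nonneg ht hh.le), Nat.cast_zero]
      have := sub_nonneg.2 hst
      positivity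
  rw [← ENNReal.ofReal_natCast, ← ENNReal.ofReal_mul (by positivity),
    Nat.cast_sub (Nat.floor_mono (by gcongr))]
  refine ENNReal.ofReal_le_ofReal ?_
  calc ((⌊t / h⌋₊ : ℝ) - ⌊s / h⌋₊) * h ≤ ((t - s) / h + 1) * h := by
        gcongr
        linarith
    _ = t - s + h := by field_simp

theorem setLIntegral_Ico_natFloor (G : ℕ → ℝ≥0∞) {h : ℝ} (hh : 0 < h) (J : ℕ) :
    ∫⁻ s in Ico 0 (J * h), G ⌊s / h⌋₊ = ∑ j ∈ Finset.range J, ENNReal.ofReal h * G j := by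
  induction J with
  | zero => simp only [Nat.cast_zero, zero_mul, Ico_self, Measure.restrict_empty,
      lintegral_zero_measure, Finset.range_zero, Finset.sum_empty]
  | succ J ih =>
    have hJ : 0 ≤ J * h := by positivity
    have hJ' : J * h ≤ (J + 1 : ℕ) * h := by gcongr; exact J.le_succ
    have floor_eq : EqOn (fun s => G ⌊s / h⌋₊) (fun _ => G J) (Ico (J * h) ((J + 1 : ℕ) * h)) := by
      intro s hs
      refine congrArg G ((Nat.floor_eq_iff (div_nonneg (hJ.trans hs.1) hh.le)).2 ?_)
      rw [le_div_iff₀ hh, div_lt_iff₀ hh]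
      exact_mod_cast hs
    rw [← Ico_union_Ico_eq_Ico hJ hJ', lintegral_union measurableSet_Ico
      (Ico_disjoint_Ico_same), ih, Finset.sum_range_succ, setLIntegral_congr_fun measurableSet_Ico
      floor_eq, setLIntegral_const, Real.volume_Ico, ← sub_mul, Nat.cast_succ, add_sub_cancel_left,
      one_mul, mul_comm (G J)]

end Curve

section EulerCurve

variable {φ f : ℝ → ℝ≥0∞} {κ : ℝ → ℝ → ℝ → ℝ≥0∞} {N a R : ℝ≥0∞} {ρ : Measure ℝ} {h T s t : ℝ}

/-- The scheme `euler` of step `h` as a piecewise constant curve, stopped at time `T`. -/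
def eulerCurve (φ : ℝ → ℝ≥0∞) (N : ℝ≥0∞) (κ : ℝ → ℝ → ℝ → ℝ≥0∞) (ρ : Measure ℝ) (h T s : ℝ) :
    Measure ℝ :=
  euler φ N (ENNReal.ofReal h) κ ρ ⌊min s T / h⌋₊

instance [SFinite ρ] : SFinite (eulerCurve φ N κ ρ h T s) :=
  inferInstanceAs (SFinite (euler ..))

theorem natFloor_min_div_mul_le (hh : 0 < h) :
    (⌊min s T / h⌋₊ : ℝ≥0∞) * ENNReal.ofReal h ≤ ENNReal.ofReal T :=
  (natFloor_div_mul_le hh _).trans (ENNReal.ofReal_le_ofReal (min_le_right s T))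

theorem setLIntegral_eulerCurve (Ψ : Measure ℝ → ℝ≥0∞) (hh : 0 < h) (ht : 0 ≤ t) (htT : t ≤ T) :
    ∫⁻ s in Ico 0 (⌊t / h⌋₊ * h), Ψ (eulerCurve φ N κ ρ h T s)
      = ∑ j ∈ Finset.range ⌊t / h⌋₊,
          ENNReal.ofReal h * Ψ (euler φ N (ENNReal.ofReal h) κ ρ j) := by
  rw [← setLIntegral_Ico_natFloor _ hh]
  refine setLIntegral_congr_fun measurableSet_Ico fun s hs => ?_
  have floor_mul_le : ⌊t / h⌋₊ * h ≤ t :=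
    (le_div_iff₀ hh).1 (Nat.floor_le (div_nonneg ht hh.le))
  simp only [eulerCurve, min_eq_left (hs.2.le.trans (floor_mul_le.trans htT))]

variable [SFinite ρ] (hκ : IsQuadraticKernel φ κ) (hρ : ∫⁻ x, weight x ∂ρ ≤ a⁻¹) (hh : 0 < h)
  (hcfl : 2 * ENNReal.ofReal h * (N * riccati φ a (ENNReal.ofReal T) * mass φ) ≤ 1)

include hκ hρ hh hcfl

theorem lintegral_weight_eulerCurve_le :
    ∫⁻ x, weight x ∂eulerCurve φ N κ ρ h T s ≤ riccati φ a (ENNReal.ofReal (min s T)) :=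
  (lintegral_weight_euler_le hκ hρ hcfl (natFloor_min_div_mul_le hh)).trans
    (riccati_mono (natFloor_div_mul_le hh _))

theorem lintegral_eulerCurve_eq (hfm : Measurable f)
    (hf : ∀ x z, 0 < z → z ≤ x → f (x + z) + f (x - z) = 2 * f x) :
    ∫⁻ x, f x ∂eulerCurve φ N κ ρ h T s = ∫⁻ x, f x ∂ρ :=
  lintegral_euler_eq hκ hρ hcfl (natFloor_min_div_mul_le hh) hfm hf

theorem eulerCurve_Iio_zero (hρ0 : ρ (Iio 0) = 0) : eulerCurve φ N κ ρ h T s (Iio 0) = 0 :=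
  euler_Iio_zero hκ hρ hcfl (natFloor_min_div_mul_le hh) hρ0

theorem lintegral_eulerCurve_add_loss (ht : 0 ≤ t) (htT : t ≤ T) (hf : Measurable f) :
    ∫⁻ x, f x ∂eulerCurve φ N κ ρ h T t
        + ∫⁻ s in Ico 0 (⌊t / h⌋₊ * h),
            ∫⁻ x, loss (rate (trunc φ N κ) (eulerCurve φ N κ ρ h T s)) f x
              ∂eulerCurve φ N κ ρ h T s
      = ∫⁻ x, f x ∂ρ
        + ∫⁻ s in Ico 0 (⌊t / h⌋₊ * h),
            ∫⁻ x, gain (rate (trunc φ N κ) (eulerCurve φ N κ ρ h T s)) f x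
              ∂eulerCurve φ N κ ρ h T s := by
  rw [setLIntegral_eulerCurve (fun μ => ∫⁻ x, loss (rate (trunc φ N κ) μ) f x ∂μ) hh ht htT,
    setLIntegral_eulerCurve (fun μ => ∫⁻ x, gain (rate (trunc φ N κ) μ) f x ∂μ) hh ht htT,
    eulerCurve, min_eq_left htT]
  exact lintegral_euler_add_sum_loss hκ hρ hcfl
    ((natFloor_div_mul_le hh t).trans (ENNReal.ofReal_le_ofReal htT)) hf

theorem lintegral_eulerCurve_le_add (hR : ∀ x, f x ≤ R) (hf : Measurable f) (s s' : ℝ) :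
    ∫⁻ x, f x ∂eulerCurve φ N κ ρ h T s ≤ ∫⁻ x, f x ∂eulerCurve φ N κ ρ h T s'
      + ENNReal.ofReal (|s - s'| + h) * (2 * R * (riccati φ a (ENNReal.ofReal T) * mass φ)
        * riccati φ a (ENNReal.ofReal T)) := by
  set B := 2 * R * (riccati φ a (ENNReal.ofReal T) * mass φ) * riccati φ a (ENNReal.ofReal T)
  have modulus {r r' : ℝ} (hr : r ≤ r') :
      (⌊min r' T / h⌋₊ - ⌊min r T / h⌋₊ : ℕ) * (ENNReal.ofReal h * B)
        ≤ ENNReal.ofReal (|r - r'| + h) * B := by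
    rw [← mul_assoc]
    gcongr
    refine (natFloor_div_sub_mul_le hh (min_le_min_right T hr)).trans
      (ENNReal.ofReal_le_ofReal ?_)
    have := abs_min_sub_min_le_max r' T r T
    rw [sub_self, abs_zero, max_eq_left (abs_nonneg _)] at this
    rw [abs_sub_comm]
    linarith [le_abs_self (min r' T - min r T)]
  have step (J : ℕ) (hJ : J * ENNReal.ofReal h ≤ ENNReal.ofReal T) :=
    le_add_and_le_add_of_step (J := J) (c := ENNReal.ofReal h * B)
      (u := fun j => ∫⁻ x, f x ∂euler φ N (ENNReal.ofReal h) κ ρ j)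
      fun j hj => lintegral_euler_step_le hκ hρ hcfl hR hf (le_trans (by gcongr) hJ)
  rcases le_total s s' with hs | hs
  · have hfloor : ⌊min s T / h⌋₊ ≤ ⌊min s' T / h⌋₊ := Nat.floor_mono (by gcongr)
    have := (step _ (natFloor_min_div_mul_le hh) _ _ (Nat.add_sub_of_le hfloor).le).2
    rw [Nat.add_sub_of_le hfloor] at this
    exact this.trans (add_le_add le_rfl (modulus hs))
  · have hfloor : ⌊min s' T / h⌋₊ ≤ ⌊min s T / h⌋₊ := Nat.floor_mono (by gcongr)
    have := (step _ (natFloor_min_div_mul_le hh) _ _ (Nat.add_sub_of_le hfloor).le).1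
    rw [Nat.add_sub_of_le hfloor] at this
    exact this.trans (add_le_add le_rfl (abs_sub_comm s s' ▸ modulus hs))

end EulerCurve

section Compactness

theorem exists_measure_natCast_lt_le {α : Type*} [MeasurableSpace α] (ν : Measure α)
    [IsFiniteMeasure ν] {w : α → ℝ≥0∞} (hw : Measurable w) (hwt : ∀ x, w x ≠ ∞) {ε : ℝ≥0∞}
    (hε : ε ≠ 0) : ∃ n : ℕ, ν {x | n < w x} ≤ ε := by
  have tendsto_tail : Tendsto (fun n : ℕ => ν {x | n < w x}) atTop
      (𝓝 (ν (⋂ n : ℕ, {x | n < w x}))) :=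
    tendsto_measure_iInter_atTop
      (fun n => (measurableSet_lt measurable_const hw).nullMeasurableSet)
      (fun m n hmn x (hx : n < w x) => lt_of_le_of_lt (by gcongr) hx) ⟨0, by finiteness⟩
  have iInter_eq : ⋂ n : ℕ, {x | n < w x} = ∅ := by
    refine eq_empty_of_forall_notMem fun x hx => ?_
    obtain ⟨n, hn⟩ := ENNReal.exists_nat_gt (hwt x)
    exact lt_asymm hn (mem_iInter.1 hx n)
  rw [iInter_eq, measure_empty] at tendsto_tail
  exact (tendsto_tail.eventually_le_const (pos_iff_ne_zero.2 hε)).exists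

theorem UnifAbsCont.asymptEquicont_withDensity {α : Type*} [MeasurableSpace α] {ν : Measure α}
    [IsFiniteMeasure ν] {μ : ℕ → ℝ → Measure α} {w : α → ℝ≥0∞} {h : ℕ → ℝ} (hw : Measurable w)
    (hwt : ∀ x, w x ≠ ∞) (hh : Tendsto h atTop (𝓝 0))
    (hac : UnifAbsCont ν fun i : ℕ × ℝ => (μ i.1 i.2).withDensity w)
    (hlip : ∀ R : ℝ≥0∞, R ≠ ∞ → ∃ L : ℝ≥0∞, L ≠ ∞ ∧ ∀ n s s' (f : α → ℝ≥0∞), Measurable f →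
      (∀ x, f x ≤ R) →
        ∫⁻ x, f x ∂μ n s ≤ ∫⁻ x, f x ∂μ n s' + ENNReal.ofReal (|s - s'| + h n) * L) :
    AsymptEquicont fun n s => (μ n s).withDensity w := by
  intro ε hε
  have hε2 := (ENNReal.half_pos hε).ne'
  have hε4 := (ENNReal.half_pos hε2).ne'
  obtain ⟨C, hC, hac⟩ := hac (ε / 2 / 2) hε4
  obtain ⟨η, hη, hCη⟩ := ENNReal.exists_nnreal_pos_mul_lt hC hε4
  obtain ⟨R, hR⟩ := exists_measure_natCast_lt_le ν hw hwt (ε := η) (by exact_mod_cast hη.ne')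
  obtain ⟨L, hL, hlip⟩ := hlip R (ENNReal.natCast_ne_top R)
  obtain ⟨δ, hδ, hLδ⟩ := ENNReal.exists_nnreal_pos_mul_lt hL hε2
  have hδ2 : (0 : ℝ) < δ / 2 := by positivity
  refine ⟨δ / 2, hδ2, ?_⟩
  filter_upwards [hh.eventually_le_const hδ2] with n hn s s' hs B hB
  have hmeas : MeasurableSet {x | R < w x} := measurableSet_lt measurable_const hw
  have tail_le : (μ n s).withDensity w {x | R < w x} ≤ ε / 2 :=
    calc _ ≤ ε / 2 / 2 + C * ν {x | R < w x} := hac (n, s) _ hmeas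
      _ ≤ ε / 2 / 2 + ε / 2 / 2 := by
        gcongr
        exact (mul_le_mul' le_rfl hR).trans (mul_comm C η ▸ hCη.le)
      _ = ε / 2 := ENNReal.add_halves _
  have core_le : (μ n s).withDensity w (B \ {x | R < w x})
      ≤ (μ n s').withDensity w (B \ {x | R < w x}) + ε / 2 := by
    have hcore := hB.diff hmeas
    rw [withDensity_apply _ hcore, withDensity_apply _ hcore, ← lintegral_indicator hcore,
      ← lintegral_indicator hcore]
    refine (hlip n s s' _ (hw.indicator hcore) fun x =>
      indicator_apply_le' (fun hx => not_lt.1 hx.2) fun _ => zero_le).trans ?_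
    gcongr
    calc ENNReal.ofReal (|s - s'| + h n) * L ≤ δ * L := by
          gcongr
          exact ENNReal.ofReal_le_of_le_toReal (by simpa using by linarith)
      _ ≤ ε / 2 := hLδ.le
  calc (μ n s).withDensity w B
      ≤ (μ n s).withDensity w (B \ {x | R < w x}) + (μ n s).withDensity w {x | R < w x} :=
        (measure_mono fun x hx => (em (x ∈ {x | R < w x})).symm.imp (⟨hx, ·⟩) id).trans
          (measure_union_le _ _)
    _ ≤ (μ n s').withDensity w (B \ {x | R < w x}) + ε / 2 + ε / 2 := add_le_add core_le tail_le
    _ = (μ n s').withDensity w (B \ {x | R < w x}) + ε := by rw [add_assoc, ENNReal.add_halves]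
    _ ≤ (μ n s').withDensity w B + ε := by gcongr; exact sdiff_subset

variable {φ d : ℝ → ℝ≥0∞} {κ : ℝ → ℝ → ℝ → ℝ≥0∞} {N : ℕ → ℝ≥0∞} {h : ℕ → ℝ} {a : ℝ≥0∞} {T : ℝ}

theorem exists_subseq_eulerCurve_setwiseTendsto (hκ : IsQuadraticKernel φ κ)
    (hΦ : secondMoment φ ≠ ∞) (hΦ0 : mass φ ≠ ∞) (hd : Measurable d) (hd_top : ∀ x, d x ≠ ∞)
    (hρ : ∫⁻ x, weight x ∂halfLine.withDensity d ≤ a⁻¹)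
    (hT : riccati φ a (ENNReal.ofReal T) ≠ ∞) (hh : ∀ n, 0 < h n) (hh0 : Tendsto h atTop (𝓝 0))
    (hcfl : ∀ n,
      2 * ENNReal.ofReal (h n) * (N n * riccati φ a (ENNReal.ofReal T) * mass φ) ≤ 1) :
    ∃ (e : ℕ → ℕ) (q : ℝ → Measure ℝ), StrictMono e ∧ ∀ s, q s ≪ referenceMeasure ∧
      SetwiseTendsto (fun n =>
        (eulerCurve φ (N (e n)) κ (halfLine.withDensity d) (h (e n)) T s).withDensity weight)
          atTop (q s) := by
  have hw : ∫⁻ x, weight x ∂halfLine.withDensity d ≠ ∞ := by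
    refine ne_top_of_le_ne_top hT (hρ.trans ?_)
    simpa only [riccati, mul_zero, tsub_zero] using riccati_mono (φ := φ) (a := a) (zero_le)
  have hac : UnifAbsCont referenceMeasure fun i : ℕ × ℝ =>
      (eulerCurve φ (N i.1) κ (halfLine.withDensity d) (h i.1) T i.2).withDensity weight := by
    let toIter (i : ℕ × ℝ) : AdmissibleIter φ (riccati φ a (ENNReal.ofReal T)) (ENNReal.ofReal T) :=
      ⟨(ENNReal.ofReal (h i.1),
        eulerRate φ (N i.1) (ENNReal.ofReal (h i.1)) κ (halfLine.withDensity d),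
        ⌊min i.2 T / h i.1⌋₊),
        isJumpRate_eulerRate_of_lt hκ hρ (hcfl i.1) (natFloor_min_div_mul_le (hh i.1)),
        natFloor_min_div_mul_le (hh i.1)⟩
    simp only [eulerCurve, euler_eq_eulerIter]
    exact (unifAbsCont_eulerIter hκ.measurable_profile hΦ hT ENNReal.ofReal_ne_top hd hd_top
      hw).comp toIter
  have hequi : AsymptEquicont fun n s =>
      (eulerCurve φ (N n) κ (halfLine.withDensity d) (h n) T s).withDensity weight := by
    refine hac.asymptEquicont_withDensity measurable_weight weight_ne_top hh0
      fun R hR => ⟨2 * R * (riccati φ a (ENNReal.ofReal T) * mass φ)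
        * riccati φ a (ENNReal.ofReal T), by finiteness, fun n s s' f hf hfR => ?_⟩
    exact lintegral_eulerCurve_le_add hκ hρ (hh n) (hcfl n) hfR hf s s'
  obtain ⟨e, q, he, hq⟩ := hequi.exists_subseq_setwiseTendsto hac
  exact ⟨e, q, he, fun s =>
    ⟨(hq s).absolutelyContinuous fun n => hac.absolutelyContinuous (e n, s), hq s⟩⟩

end Compactness

/-! ### Passage to the limit -/

section WeightedLimit

variable {φ : ℝ → ℝ≥0∞} {κ : ℝ → ℝ → ℝ → ℝ≥0∞} {N : ℕ → ℝ≥0∞} {M R : ℝ≥0∞}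
  {μ : ℕ → Measure ℝ} {m : Measure ℝ} [IsFiniteMeasure (m.withDensity weight)]
  (hμ : SetwiseTendsto (fun n => (μ n).withDensity weight) atTop (m.withDensity weight))

include hμ

theorem tendsto_lintegral_of_le_weight {f : ℝ → ℝ≥0∞} (hf : Measurable f)
    (hfw : ∀ x, f x ≤ weight x) :
    Tendsto (fun n => ∫⁻ x, f x ∂μ n) atTop (𝓝 (∫⁻ x, f x ∂m)) :=
  hμ.tendsto_lintegral_of_withDensity measurable_weight weight_ne_zero weight_ne_top
    (fun _ => hf) ENNReal.one_ne_top (fun _ x => (hfw x).trans_eq (one_mul _).symm)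
    fun _ => tendsto_const_nhds

theorem setwiseTendsto_of_withDensity_weight : SetwiseTendsto μ atTop m := by
  intro B hB
  simpa only [lintegral_indicator_one hB] using
    tendsto_lintegral_of_le_weight hμ (measurable_one.indicator hB) fun x =>
      (indicator_le_self B 1 x).trans (one_le_weight x)

theorem tendsto_rate_trunc (hκ : IsQuadraticKernel φ κ) (hN : Tendsto N atTop (𝓝 ∞)) (x : ℝ)
    {z : ℝ} (hz : 0 < z) (hφz : φ z ≠ ∞) :
    Tendsto (fun n => rate (trunc φ (N n) κ) (μ n) (x, z)) atTop (𝓝 (rate κ m (x, z))) := by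
  have hw := weight_ne_top x
  refine hμ.tendsto_lintegral_of_withDensity measurable_weight weight_ne_zero weight_ne_top
    (fun n => (hκ.trunc (N n)).measurable_snd x z) (C := weight x * φ z) (by finiteness)
    (fun n y => ((hκ.trunc (N n)).le x y z hz).trans_eq (by ring)) fun y => ?_
  refine tendsto_const_nhds.congr' ?_
  filter_upwards [hN.eventually_const_lt hw.lt_top] with n hn using (trunc_eq hκ hz hn.le).symm

theorem tendsto_lintegral_jump_mul (hφ : Measurable φ) (hΦ : mass φ ≠ ∞) (hM : M ≠ ∞)
    (hR : R ≠ ∞) {k : ℕ → ℝ × ℝ → ℝ≥0∞} {k' g : ℝ × ℝ → ℝ≥0∞} (hkm : ∀ n, Measurable (k n))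
    (hk : ∀ n x z, 0 < z → k n (x, z) ≤ weight x * M * φ z) (hg : Measurable g)
    (hgR : ∀ p, g p ≤ 2 * R)
    (hlim : ∀ x, ∀ᵐ z ∂halfLine, Tendsto (fun n => k n (x, z)) atTop (𝓝 (k' (x, z)))) :
    Tendsto (fun n => ∫⁻ x, ∫⁻ z, k n (x, z) * g (x, z) ∂halfLine ∂μ n) atTop
      (𝓝 (∫⁻ x, ∫⁻ z, k' (x, z) * g (x, z) ∂halfLine ∂m)) := by
  have hR2 : 2 * R ≠ ∞ := by finiteness
  refine hμ.tendsto_lintegral_of_withDensity measurable_weight weight_ne_zero weight_ne_top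
    (fun n => ((hkm n).mul hg).lintegral_prod_right') (C := 2 * R * (M * mass φ)) (by finiteness)
    (fun n x => lintegral_jump_mul_le hφ (hk n) (fun z => hgR (x, z)) x) fun x => ?_
  refine tendsto_lintegral_of_dominated_convergence (fun z => weight x * M * φ z * (2 * R))
    (fun n => by fun_prop) (fun n => ae_halfLine fun z hz => mul_le_mul' (hk n x z hz) (hgR _)) ?_
    ((hlim x).mono fun z hz => ENNReal.Tendsto.mul_const hz
      (Or.inr (ne_top_of_le_ne_top hR2 (hgR _))))
  rw [lintegral_mul_const _ (by fun_prop), lintegral_const_mul _ hφ]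
  exact ENNReal.mul_ne_top (ENNReal.mul_ne_top (by finiteness [weight_ne_top x]) hΦ) hR2

end WeightedLimit

theorem tendsto_setLIntegral_Ico {G : ℕ → ℝ → ℝ≥0∞} {G' : ℝ → ℝ≥0∞} {b : ℕ → ℝ} {r t : ℝ}
    {C : ℝ≥0∞} (hG : ∀ n, Measurable (G n)) (hC : C ≠ ∞) (hGC : ∀ n s, G n s ≤ C)
    (hlim : ∀ s, Tendsto (fun n => G n s) atTop (𝓝 (G' s))) (hb : ∀ n, b n ≤ t)
    (hbt : Tendsto b atTop (𝓝 t)) :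
    Tendsto (fun n => ∫⁻ s in Ico r (b n), G n s) atTop (𝓝 (∫⁻ s in Ico r t, G' s)) := by
  have restrict_eq (n : ℕ) :
      ∫⁻ s in Ico r (b n), G n s = ∫⁻ s in Ico r t, (Iio (b n)).indicator (G n) s := by
    rw [setLIntegral_indicator measurableSet_Iio, inter_comm, Ico_inter_Iio, min_eq_right (hb n)]
  simp only [restrict_eq]
  refine tendsto_lintegral_of_dominated_convergence (fun _ => C)
    (fun n => (hG n).indicator measurableSet_Iio)
    (fun n => ae_of_all _ fun s => (indicator_le_self _ _ s).trans (hGC n s))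
    (by rw [setLIntegral_const, Real.volume_Ico]; finiteness) ?_
  refine (ae_restrict_iff' measurableSet_Ico).2 (ae_of_all _ fun s hs => ?_)
  refine (hlim s).congr' ?_
  filter_upwards [hbt.eventually_const_lt hs.2] with n hn
  exact (indicator_of_mem (mem_Iio.2 hn) (G n)).symm

theorem tendsto_natFloor_div_mul {h : ℕ → ℝ} (hh : ∀ n, 0 < h n) (hh0 : Tendsto h atTop (𝓝 0))
    {t : ℝ} (ht : 0 ≤ t) : Tendsto (fun n => ⌊t / h n⌋₊ * h n) atTop (𝓝 t) := by
  refine tendsto_of_tendsto_of_tendsto_of_le_of_le (g := fun n => t - h n) (h := fun _ => t)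
    (by simpa only [sub_zero] using hh0.const_sub t) tendsto_const_nhds (fun n => ?_) fun n => ?_
  · have := (div_lt_iff₀ (hh n)).1 (Nat.lt_floor_add_one (t / h n))
    simp only
    linarith
  · exact (le_div_iff₀ (hh n)).1 (Nat.floor_le (div_nonneg ht (hh n).le))

theorem exists_cfl_steps {b c : ℝ≥0∞} (hb : b ≠ ∞) (hc : c ≠ ∞) :
    ∃ h : ℕ → ℝ, (∀ n, 0 < h n) ∧ Tendsto h atTop (𝓝 0) ∧
      ∀ n : ℕ, 2 * ENNReal.ofReal (h n) * (n * b * c) ≤ 1 := by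
  lift b to NNReal using hb
  lift c to NNReal using hc
  have hden (n : ℕ) : (0 : ℝ) < 2 * (n * b * c) + n + 1 := by positivity
  refine ⟨fun n => (2 * (n * b * c) + n + 1)⁻¹, fun n => inv_pos.2 (hden n), ?_, fun n => ?_⟩
  · refine tendsto_inv_atTop_zero.comp (tendsto_atTop_mono (fun n => ?_)
      tendsto_natCast_atTop_atTop)
    have : (0 : ℝ) ≤ n * b * c := by positivity
    linarith
  · have cfl : 2 * (2 * (n * b * c) + n + 1 : ℝ)⁻¹ * (n * b * c) ≤ 1 := by
      rw [mul_right_comm, ← div_eq_mul_inv, div_le_one (hden n)]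
      linarith [(Nat.cast_nonneg n : (0 : ℝ) ≤ n)]
    have := inv_nonneg.2 (hden n).le
    have := ENNReal.ofReal_le_ofReal cfl
    rwa [ENNReal.ofReal_mul (by positivity), ENNReal.ofReal_mul zero_le_two,
      ENNReal.ofReal_mul (by positivity), ENNReal.ofReal_mul (by positivity), ENNReal.ofReal_ofNat,
      ENNReal.ofReal_natCast, ENNReal.ofReal_coe_nnreal, ENNReal.ofReal_coe_nnreal,
      ENNReal.ofReal_one] at this

section MeasureSolution

variable {φ f : ℝ → ℝ≥0∞} {κ : ℝ → ℝ → ℝ → ℝ≥0∞} {N : ℕ → ℝ≥0∞} {a : ℝ≥0∞} {ρ : Measure ℝ}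
  {h : ℕ → ℝ} {T s t : ℝ}

/-- A measure-valued solution on `[0, T]`, in the generality of a kernel `κ` with values in
`[0, ∞]`, of the exchange-driven growth equation started at `ρ`, together with the a priori bounds
and conservation laws inherited from the Euler scheme. The curve is defined at every real time; at
`s > T` it is only required to obey the bounds that hold at time `T`. -/
structure IsMeasureSolution (φ : ℝ → ℝ≥0∞) (κ : ℝ → ℝ → ℝ → ℝ≥0∞) (a : ℝ≥0∞) (T : ℝ)
    (ρ : Measure ℝ) (m : ℝ → Measure ℝ) : Prop where
  measurable : Measurable m
  absolutelyContinuous : ∀ s, m s ≪ volume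
  Iio_zero : ρ (Iio 0) = 0 → ∀ s, m s (Iio 0) = 0
  lintegral_weight_le : ∀ s, ∫⁻ x, weight x ∂m s ≤ riccati φ a (ENNReal.ofReal (min s T))
  lintegral_eq : ∀ f : ℝ → ℝ≥0∞, Measurable f → (∀ x, f x ≤ weight x) →
    (∀ x z, 0 < z → z ≤ x → f (x + z) + f (x - z) = 2 * f x) →
      ∀ s, ∫⁻ x, f x ∂m s = ∫⁻ x, f x ∂ρ
  weak : ∀ t, 0 ≤ t → t ≤ T → ∀ f : ℝ → ℝ≥0∞, Measurable f → (∀ x, f x ≤ 1) →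
    ∫⁻ x, f x ∂m t + ∫⁻ s in Ico 0 t, ∫⁻ x, loss (rate κ (m s)) f x ∂m s
      = ∫⁻ x, f x ∂ρ + ∫⁻ s in Ico 0 t, ∫⁻ x, gain (rate κ (m s)) f x ∂m s

theorem measurable_comp_eulerCurve {β : Type*} [MeasurableSpace β] (Ψ : Measure ℝ → β)
    {N : ℝ≥0∞} {h : ℝ} : Measurable fun s => Ψ (eulerCurve φ N κ ρ h T s) :=
  (measurable_from_nat (f := fun j => Ψ (euler φ N (ENNReal.ofReal h) κ ρ j))).comp
    (Nat.measurable_floor.comp (f := fun s => min s T / h) (by fun_prop))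

theorem riccati_min_le : riccati φ a (ENNReal.ofReal (min s T)) ≤ riccati φ a (ENNReal.ofReal T) :=
  riccati_mono (ENNReal.ofReal_le_ofReal (min_le_right s T))

variable [SFinite ρ] {m : ℝ → Measure ℝ} [∀ s, IsFiniteMeasure ((m s).withDensity weight)]
  (hκ : IsQuadraticKernel φ κ) (hΦ : mass φ ≠ ∞) (hρ : ∫⁻ x, weight x ∂ρ ≤ a⁻¹)
  (hT : riccati φ a (ENNReal.ofReal T) ≠ ∞) (hN : Tendsto N atTop (𝓝 ∞)) (hh : ∀ n, 0 < h n)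
  (hh0 : Tendsto h atTop (𝓝 0))
  (hcfl : ∀ n, 2 * ENNReal.ofReal (h n) * (N n * riccati φ a (ENNReal.ofReal T) * mass φ) ≤ 1)
  (hm : ∀ s, SetwiseTendsto (fun n => (eulerCurve φ (N n) κ ρ (h n) T s).withDensity weight) atTop
    ((m s).withDensity weight))

include hκ hΦ hρ hT hN hh hh0 hcfl hm

theorem tendsto_setLIntegral_eulerCurve_jump (ht : 0 ≤ t) {g : ℝ × ℝ → ℝ≥0∞} (hg : Measurable g)
    (hg2 : ∀ p, g p ≤ 2 * 1) :
    Tendsto (fun n => ∫⁻ s in Ico 0 (⌊t / h n⌋₊ * h n), ∫⁻ x, ∫⁻ z,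
        rate (trunc φ (N n) κ) (eulerCurve φ (N n) κ ρ (h n) T s) (x, z) * g (x, z) ∂halfLine
          ∂eulerCurve φ (N n) κ ρ (h n) T s) atTop
      (𝓝 (∫⁻ s in Ico 0 t, ∫⁻ x, ∫⁻ z, rate κ (m s) (x, z) * g (x, z) ∂halfLine ∂m s)) := by
  set S := riccati φ a (ENNReal.ofReal T)
  have hS (n : ℕ) (s : ℝ) : ∫⁻ x, weight x ∂eulerCurve φ (N n) κ ρ (h n) T s ≤ S :=
    (lintegral_weight_eulerCurve_le hκ hρ (hh n) (hcfl n)).trans riccati_min_le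
  have rate_le (n : ℕ) (s x z : ℝ) (hz : 0 < z) :=
    (hκ.trunc (N n)).rate_le (hS n s) x hz
  refine tendsto_setLIntegral_Ico (C := 2 * 1 * (S * mass φ) * S)
    (fun n => measurable_comp_eulerCurve fun μ =>
      ∫⁻ x, ∫⁻ z, rate (trunc φ (N n) κ) μ (x, z) * g (x, z) ∂halfLine ∂μ)
    (by finiteness) (fun n s => ?_) (fun s => ?_)
    (fun n => (le_div_iff₀ (hh n)).1 (Nat.floor_le (div_nonneg ht (hh n).le)))
    (tendsto_natFloor_div_mul hh hh0 ht)
  · refine (lintegral_mono fun x => lintegral_jump_mul_le hκ.measurable_profile (rate_le n s)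
      (fun z => hg2 (x, z)) x).trans ?_
    rw [lintegral_const_mul _ measurable_weight]
    exact mul_le_mul' le_rfl (hS n s)
  · have φ_lt_top : ∀ᵐ z ∂halfLine, φ z < ∞ := ae_lt_top hκ.measurable_profile hΦ
    refine tendsto_lintegral_jump_mul (hm s) hκ.measurable_profile hΦ hT ENNReal.one_ne_top
      (fun n => (hκ.trunc (N n)).measurable_rate _) (fun n => rate_le n s) hg hg2 fun x => ?_
    filter_upwards [φ_lt_top, ae_halfLine fun z hz => hz] with z hφz hz
    exact tendsto_rate_trunc (hm s) hκ hN x hz hφz.ne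

theorem lintegral_limit_add_loss (ht : 0 ≤ t) (htT : t ≤ T) (hf : Measurable f)
    (hf1 : ∀ x, f x ≤ 1) :
    ∫⁻ x, f x ∂m t + ∫⁻ s in Ico 0 t, ∫⁻ x, loss (rate κ (m s)) f x ∂m s
      = ∫⁻ x, f x ∂ρ + ∫⁻ s in Ico 0 t, ∫⁻ x, gain (rate κ (m s)) f x ∂m s := by
  have loss_tendsto := tendsto_setLIntegral_eulerCurve_jump hκ hΦ hρ hT hN hh hh0 hcfl hm ht
    (g := fun p => 2 * f p.1) (by fun_prop) fun p => mul_le_mul' le_rfl (hf1 _)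
  have gain_tendsto := tendsto_setLIntegral_eulerCurve_jump hκ hΦ hρ hT hN hh hh0 hcfl hm ht
    (g := fun p => f (p.1 + p.2) + f (p.1 - p.2)) (by fun_prop)
    fun p => (add_le_add (hf1 _) (hf1 _)).trans_eq (two_mul 1).symm
  refine tendsto_nhds_unique ((tendsto_lintegral_of_le_weight (hm t) hf
    fun x => (hf1 x).trans (one_le_weight x)).add loss_tendsto)
    ((gain_tendsto.const_add _).congr fun n => ?_)
  exact (lintegral_eulerCurve_add_loss hκ hρ (hh n) (hcfl n) ht htT hf).symm

theorem isMeasureSolution_of_tendsto (hac : ∀ s, m s ≪ volume) :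
    IsMeasureSolution φ κ a T ρ m where
  measurable := by
    refine Measure.measurable_of_measurable_coe _ fun B hB => ?_
    exact measurable_of_tendsto_metrizable
      (f := fun n s => eulerCurve φ (N n) κ ρ (h n) T s B)
      (fun n => measurable_comp_eulerCurve fun μ => μ B)
      (tendsto_pi_nhds.2 fun s => setwiseTendsto_of_withDensity_weight (hm s) B hB)
  absolutelyContinuous := hac
  Iio_zero hρ0 s := tendsto_nhds_unique
    (setwiseTendsto_of_withDensity_weight (hm s) _ measurableSet_Iio)
    (tendsto_const_nhds.congr fun n => (eulerCurve_Iio_zero hκ hρ (hh n) (hcfl n) hρ0).symm)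
  lintegral_weight_le s := le_of_tendsto'
    (tendsto_lintegral_of_le_weight (hm s) measurable_weight fun _ => le_rfl)
    fun n => lintegral_weight_eulerCurve_le hκ hρ (hh n) (hcfl n)
  lintegral_eq f hfm hfw hf s := tendsto_nhds_unique (tendsto_lintegral_of_le_weight (hm s) hfm hfw)
    (tendsto_const_nhds.congr fun n =>
      (lintegral_eulerCurve_eq hκ hρ (hh n) (hcfl n) hfm hf).symm)
  weak t ht htT f hf hf1 := lintegral_limit_add_loss hκ hΦ hρ hT hN hh hh0 hcfl hm ht htT hf hf1

end MeasureSolution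

theorem exists_isMeasureSolution {φ d : ℝ → ℝ≥0∞} {κ : ℝ → ℝ → ℝ → ℝ≥0∞} {a : ℝ≥0∞} {T : ℝ}
    (hκ : IsQuadraticKernel φ κ) (hΦ : secondMoment φ ≠ ∞) (hΦ0 : mass φ ≠ ∞) (hd : Measurable d)
    (hd_top : ∀ x, d x ≠ ∞) (hρ : ∫⁻ x, weight x ∂halfLine.withDensity d ≤ a⁻¹)
    (hT : riccati φ a (ENNReal.ofReal T) ≠ ∞) :
    ∃ m, IsMeasureSolution φ κ a T (halfLine.withDensity d) m := by
  obtain ⟨h, hh, hh0, hcfl⟩ := exists_cfl_steps hT hΦ0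
  obtain ⟨e, q, he, hq⟩ := exists_subseq_eulerCurve_setwiseTendsto hκ hΦ hΦ0 hd hd_top hρ hT hh hh0
    hcfl
  have withDensity_inv (s : ℝ) :
      ((q s).withDensity weight⁻¹).withDensity weight = q s := by
    simpa only [Pi.inv_apply, inv_inv] using withDensity_inv_same (μ := q s) measurable_weight.inv
      (ae_of_all _ fun x => ENNReal.inv_ne_zero.2 (weight_ne_top x))
      (ae_of_all _ fun x => ENNReal.inv_ne_top.2 (weight_ne_zero x))
  have (s : ℝ) : IsFiniteMeasure
      (((q s).withDensity weight⁻¹).withDensity weight) := by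
    rw [withDensity_inv]
    refine (hq s).2.isFiniteMeasure hT fun n => ?_
    rw [withDensity_apply _ .univ, setLIntegral_univ]
    exact (lintegral_weight_eulerCurve_le hκ hρ (hh _) (hcfl _)).trans riccati_min_le
  exact ⟨_, isMeasureSolution_of_tendsto hκ hΦ0 hρ hT
    (ENNReal.tendsto_nat_nhds_top.comp he.tendsto_atTop) (fun n => hh (e n))
    (hh0.comp he.tendsto_atTop) (fun n => hcfl (e n))
    (fun s => (withDensity_inv s).symm ▸ (hq s).2) fun s =>
      (withDensity_absolutelyContinuous _ _).trans
        ((hq s).1.trans (withDensity_absolutelyContinuous _ _))⟩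

/-! ### From measures to densities -/

section Density

theorem exists_measurable_density {α β : Type*} [MeasurableSpace α] [MeasurableSpace β]
    [MeasurableSpace.CountablyGenerated β] {ν : Measure β} [SigmaFinite ν]
    (κ : ProbabilityTheory.Kernel α β) [ProbabilityTheory.IsFiniteKernel κ] (hκ : ∀ a, κ a ≪ ν) :
    ∃ c : α → β → ℝ, Measurable (fun p : α × β => c p.1 p.2) ∧ (∀ a b, 0 ≤ c a b) ∧
      ∀ a, κ a = ν.withDensity fun b => ENNReal.ofReal (c a b) := by
  set η := ProbabilityTheory.Kernel.const α ν.toFinite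
  have D_meas : Measurable fun p : α × β => κ.rnDeriv η p.1 p.2 :=
    ProbabilityTheory.Kernel.measurable_rnDeriv _ _
  set r := ν.toFinite.rnDeriv ν
  have κ_eq (a : α) : κ a = ν.withDensity fun b => r b * κ.rnDeriv η a b := by
    have := ProbabilityTheory.Kernel.withDensity_rnDeriv_eq (κ := κ) (η := η)
      ((hκ a).trans (absolutelyContinuous_toFinite ν))
    rw [ProbabilityTheory.Kernel.withDensity_apply _ D_meas] at this
    rw [← this, ProbabilityTheory.Kernel.const_apply,
      ← Measure.withDensity_rnDeriv_eq _ _ (toFinite_absolutelyContinuous ν),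
      ← withDensity_mul _ (by fun_prop) (by fun_prop)]
    rfl
  refine ⟨fun a b => (r b * κ.rnDeriv η a b).toReal, by fun_prop,
    fun a b => ENNReal.toReal_nonneg, fun a => ?_⟩
  have lintegral_ne_top : ∫⁻ b, r b * κ.rnDeriv η a b ∂ν ≠ ∞ := by
    rw [← setLIntegral_univ, ← withDensity_apply _ .univ, ← κ_eq]
    exact measure_ne_top _ _
  rw [κ_eq]
  refine withDensity_congr_ae ?_
  filter_upwards [ae_lt_top (by fun_prop) lintegral_ne_top] with b hb
  exact (ENNReal.ofReal_toReal hb.ne).symm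

theorem absolutelyContinuous_halfLine {μ : Measure ℝ} (hμ : μ ≪ volume) (hμ0 : μ (Iio 0) = 0) :
    μ ≪ halfLine := by
  have measure_Iic : μ (Iic 0) = 0 := by
    rw [← Iio_union_right, measure_union_null_iff]
    exact ⟨hμ0, hμ Real.volume_singleton⟩
  rw [← Measure.restrict_eq_self_of_ae_mem (s := Ioi 0) (μ := μ)]
  · exact hμ.restrict _
  · rw [ae_iff]
    simpa only [mem_Ioi, not_lt, Iic_def] using measure_Iic

variable {c g : ℝ → ℝ}

theorem lintegral_withDensity_halfLine (hc : Measurable c) (hg : Measurable g)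
    (hg0 : ∀ x, 0 < x → 0 ≤ g x) :
    ∫⁻ x, ENNReal.ofReal (g x) ∂halfLine.withDensity (fun x => ENNReal.ofReal (c x))
      = ∫⁻ x, ENNReal.ofReal (g x * c x) ∂halfLine := by
  rw [lintegral_withDensity_eq_lintegral_mul _ (by fun_prop) (by fun_prop)]
  exact lintegral_congr_ae (ae_halfLine fun x hx =>
    (mul_comm _ _).trans (ENNReal.ofReal_mul (hg0 x hx)).symm)

theorem setIntegral_Ioi_mul_eq_toReal (hc : Measurable c) (hc0 : 0 ≤ᵐ[halfLine] c)
    (hg : Measurable g) (hg0 : ∀ x, 0 < x → 0 ≤ g x) :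
    ∫ x in Ioi 0, g x * c x = (∫⁻ x, ENNReal.ofReal (g x)
      ∂halfLine.withDensity fun x => ENNReal.ofReal (c x)).toReal := by
  rw [lintegral_withDensity_halfLine hc hg hg0]
  refine integral_eq_lintegral_of_nonneg_ae ?_ (by fun_prop)
  filter_upwards [hc0, ae_halfLine hg0] with x hcx hgx using mul_nonneg hgx hcx

theorem integrableOn_Ioi_mul_iff (hc : Measurable c) (hc0 : 0 ≤ᵐ[halfLine] c)
    (hg : Measurable g) (hg0 : ∀ x, 0 < x → 0 ≤ g x) :
    IntegrableOn (fun x => g x * c x) (Ioi 0) ↔ ∫⁻ x, ENNReal.ofReal (g x)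
      ∂halfLine.withDensity (fun x => ENNReal.ofReal (c x)) ≠ ∞ := by
  rw [lintegral_withDensity_halfLine hc hg hg0]
  refine (lintegral_ofReal_ne_top_iff_integrable (by fun_prop) ?_).symm
  filter_upwards [hc0, ae_halfLine hg0] with x hcx hgx using mul_nonneg hgx hcx

/-- The measures `m s` have the jointly measurable densities `c s` on the half-line. -/
structure IsDensity (c : ℝ → ℝ → ℝ) (m : ℝ → Measure ℝ) : Prop where
  measurable : Measurable fun p : ℝ × ℝ => c p.1 p.2
  nonneg : ∀ s x, 0 ≤ c s x
  eq_withDensity : ∀ s, m s = halfLine.withDensity fun x => ENNReal.ofReal (c s x)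

theorem IsDensity.measurable_right {c : ℝ → ℝ → ℝ} {m : ℝ → Measure ℝ} (hc : IsDensity c m)
    (s : ℝ) : Measurable (c s) :=
  hc.measurable.comp (f := fun x => (s, x)) (by fun_prop)

variable {φ : ℝ → ℝ≥0∞} {κ : ℝ → ℝ → ℝ → ℝ≥0∞} {a : ℝ≥0∞} {T : ℝ} {ρ : Measure ℝ}
  {m : ℝ → Measure ℝ}

theorem IsMeasureSolution.lintegral_weight_le_riccati (hm : IsMeasureSolution φ κ a T ρ m)
    (s : ℝ) : ∫⁻ x, weight x ∂m s ≤ riccati φ a (ENNReal.ofReal T) :=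
  (hm.lintegral_weight_le s).trans riccati_min_le

theorem IsMeasureSolution.measure_univ_le (hm : IsMeasureSolution φ κ a T ρ m) (s : ℝ) :
    m s univ ≤ riccati φ a (ENNReal.ofReal T) := by
  rw [← lintegral_one]
  exact (lintegral_mono one_le_weight).trans (hm.lintegral_weight_le_riccati s)

theorem IsMeasureSolution.exists_isDensity (hm : IsMeasureSolution φ κ a T ρ m)
    (hρ : ρ (Iio 0) = 0) (hT : riccati φ a (ENNReal.ofReal T) ≠ ∞) : ∃ c, IsDensity c m := by
  let η : ProbabilityTheory.Kernel ℝ ℝ := ⟨m, hm.measurable⟩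
  have : ProbabilityTheory.IsFiniteKernel η := ⟨_, hT.lt_top, hm.measure_univ_le⟩
  have : SigmaFinite halfLine := inferInstanceAs (SigmaFinite (volume.restrict _))
  obtain ⟨c, hc, hc0, hm_eq⟩ := exists_measurable_density η fun s =>
    absolutelyContinuous_halfLine (hm.absolutelyContinuous s) (hm.Iio_zero hρ s)
  exact ⟨c, hc, hc0, hm_eq⟩

end Density

section Collision

theorem measurableSet_Dcgedg : MeasurableSet Dcgedg := by unfold Dcgedg; measurability

theorem setLIntegral_Dcgedg {F : ℝ × ℝ × ℝ → ℝ≥0∞}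
    (hF : ∀ x y z, x < z ∨ y < z → F (x, y, z) = 0) :
    ∫⁻ p in Dcgedg, F p = ∫⁻ p, F p ∂halfLine.prod (halfLine.prod halfLine) := by
  have octant : halfLine.prod (halfLine.prod halfLine)
      = volume.restrict (Ici 0 ×ˢ Ici 0 ×ˢ Ici 0) := by
    rw [halfLine, restrict_Ioi_eq_restrict_Ici, Measure.prod_restrict, Measure.prod_restrict]
    rfl
  rw [octant, ← lintegral_indicator measurableSet_Dcgedg,
    ← lintegral_indicator (measurableSet_Ici.prod (measurableSet_Ici.prod measurableSet_Ici))]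
  refine lintegral_congr fun ⟨x, y, z⟩ => ?_
  by_cases hzxy : z ≤ x ∧ z ≤ y
  · refine indicator_eq_indicator ?_ rfl
    simp only [Dcgedg, mem_ofPred_eq, mem_prod, mem_Ici, hzxy, and_true]
  · rw [not_and_or, not_le, not_le] at hzxy
    have h0 := hF x y z hzxy
    rw [indicator_apply_eq_zero.2 fun _ => h0, indicator_apply_eq_zero.2 fun _ => h0]

theorem lintegral_rate_mul_withDensity {κ : ℝ → ℝ → ℝ → ℝ≥0∞}
    (hκ : Measurable fun p : ℝ × ℝ × ℝ => κ p.1 p.2.1 p.2.2) {d : ℝ → ℝ≥0∞} (hd : Measurable d)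
    {g : ℝ × ℝ → ℝ≥0∞} (hg : Measurable g) :
    ∫⁻ x, ∫⁻ z, rate κ (halfLine.withDensity d) (x, z) * g (x, z) ∂halfLine ∂halfLine.withDensity d
      = ∫⁻ p, κ p.1 p.2.1 p.2.2 * d p.1 * d p.2.1 * g (p.1, p.2.2)
          ∂halfLine.prod (halfLine.prod halfLine) := by
  have κ_meas (x : ℝ) : Measurable fun q : ℝ × ℝ => κ x q.1 q.2 :=
    hκ.comp (f := fun q : ℝ × ℝ => (x, q)) (by fun_prop)
  have inner (x : ℝ) : ∫⁻ z, rate κ (halfLine.withDensity d) (x, z) * g (x, z) ∂halfLine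
      = ∫⁻ q, d q.1 * κ x q.1 q.2 * g (x, q.2) ∂halfLine.prod halfLine := by
    have := κ_meas x
    rw [lintegral_prod_symm' _ (by fun_prop)]
    refine lintegral_congr fun z => ?_
    have : Measurable fun y => κ x y z := (κ_meas x).comp (f := fun y => (y, z)) (by fun_prop)
    rw [rate, lintegral_withDensity_eq_lintegral_mul _ hd this,
      ← lintegral_mul_const _ (by fun_prop)]
    rfl
  simp only [inner]
  rw [lintegral_withDensity_eq_lintegral_mul _ hd, lintegral_prod _ (by fun_prop)]
  · refine lintegral_congr fun x => ?_
    have := κ_meas x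
    rw [Pi.mul_apply, ← lintegral_const_mul _ (by fun_prop)]
    exact lintegral_congr fun q => by ring
  · exact Measurable.lintegral_prod_right'
      (f := fun p : ℝ × ℝ × ℝ => d p.2.1 * κ p.1 p.2.1 p.2.2 * g (p.1, p.2.2)) (by fun_prop)

/-- The integrand `K(x,y,z) c_s(x) c_s(y)` of the weak formulation, at `p = (s, x, y, z)`. -/
def collision (K : ℝ → ℝ → ℝ → ℝ) (c : ℝ → ℝ → ℝ) (p : ℝ × ℝ × ℝ × ℝ) : ℝ :=
  K p.2.1 p.2.2.1 p.2.2.2 * c p.1 p.2.1 * c p.1 p.2.2.1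

variable {K : ℝ → ℝ → ℝ → ℝ} {c : ℝ → ℝ → ℝ} {m : ℝ → Measure ℝ}

theorem measurable_collision (hK : IsKernel K) (hc : IsDensity c m) :
    Measurable (collision K c) :=
  ((hK.meas.comp measurable_snd).mul
    (hc.measurable.comp (f := fun p : ℝ × ℝ × ℝ × ℝ => (p.1, p.2.1)) (by fun_prop))).mul
    (hc.measurable.comp (f := fun p : ℝ × ℝ × ℝ × ℝ => (p.1, p.2.2.1)) (by fun_prop))

theorem collision_nonneg (hK : IsKernel K) (hc : IsDensity c m) (p : ℝ × ℝ × ℝ × ℝ) :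
    0 ≤ collision K c p :=
  mul_nonneg (mul_nonneg (hK.nonneg _ _ _) (hc.nonneg _ _)) (hc.nonneg _ _)

theorem setLIntegral_collision_mul (hK : IsKernel K) (hc : IsDensity c m) {g : ℝ × ℝ → ℝ≥0∞}
    (hg : Measurable g) (t : ℝ) :
    ∫⁻ p in Ioc 0 t ×ˢ Dcgedg, ENNReal.ofReal (collision K c p) * g (p.2.1, p.2.2.2)
      = ∫⁻ s in Ico 0 t, ∫⁻ x, ∫⁻ z,
          rate (fun x y z => ENNReal.ofReal (K x y z)) (m s) (x, z) * g (x, z) ∂halfLine ∂m s := by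
  have := measurable_collision hK hc
  rw [Measure.volume_eq_prod, ← Measure.prod_restrict, lintegral_prod _ (by fun_prop),
    restrict_Ico_eq_restrict_Ioc]
  refine lintegral_congr fun s => ?_
  have hcs := hc.measurable_right s
  rw [setLIntegral_Dcgedg, hc.eq_withDensity,
    lintegral_rate_mul_withDensity hK.meas.ennreal_ofReal (by fun_prop) hg]
  · refine lintegral_congr fun p => ?_
    rw [collision, ENNReal.ofReal_mul (mul_nonneg (hK.nonneg _ _ _) (hc.nonneg _ _)),
      ENNReal.ofReal_mul (hK.nonneg _ _ _)]
  · rintro x y z (hxz | hyz)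
    · simp only [collision, hK.vanish x y z hxz, zero_mul, ENNReal.ofReal_zero]
    · simp only [collision, hK.vanish_right hyz, zero_mul, ENNReal.ofReal_zero]

end Collision

section WeakSolution

theorem continuousOn_setIntegral_Ioc_prod {β E : Type*} [MeasurableSpace β] {ν : Measure β}
    [SFinite ν] [NormedAddCommGroup E] [NormedSpace ℝ E] {F : ℝ × β → E} {D : Set β} {a b : ℝ}
    (hF : IntegrableOn F (Ioc a b ×ˢ D) (volume.prod ν)) :
    ContinuousOn (fun t => ∫ p in Ioc a t ×ˢ D, F p ∂volume.prod ν) (Icc a b) := by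
  refine ContinuousOn.congr (f := fun t => ∫ s in Ioc a t, ∫ q in D, F (s, q) ∂ν)
    (intervalIntegral.continuousOn_primitive ?_) fun t ht =>
    setIntegral_prod F (hF.mono_set (prod_mono (Ioc_subset_Ioc_right ht.2) le_rfl))
  rw [integrableOn_Icc_iff_integrableOn_Ioc]
  rw [IntegrableOn, ← Measure.prod_restrict] at hF
  exact hF.integral_prod_left

variable {K : ℝ → ℝ → ℝ → ℝ} {φ : ℝ → ℝ≥0∞} {κ : ℝ → ℝ → ℝ → ℝ≥0∞} {a : ℝ≥0∞} {T t : ℝ}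
  {ρ : Measure ℝ} {m : ℝ → Measure ℝ} {c : ℝ → ℝ → ℝ} {c₀ : ℝ → ℝ}

theorem IsMeasureSolution.setLIntegral_jump_ne_top (hκ : IsQuadraticKernel φ κ)
    (hΦ0 : mass φ ≠ ∞) (hm : IsMeasureSolution φ κ a T ρ m)
    (hT : riccati φ a (ENNReal.ofReal T) ≠ ∞) {g : ℝ × ℝ → ℝ≥0∞} (hg : ∀ p, g p ≤ 2 * 1) :
    ∫⁻ s in Ico 0 t, ∫⁻ x, ∫⁻ z, rate κ (m s) (x, z) * g (x, z) ∂halfLine ∂m s ≠ ∞ := by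
  set S := riccati φ a (ENNReal.ofReal T)
  have hS := hm.lintegral_weight_le_riccati
  have bound (s : ℝ) : ∫⁻ x, ∫⁻ z, rate κ (m s) (x, z) * g (x, z) ∂halfLine ∂m s
      ≤ 2 * 1 * (S * mass φ) * S := by
    refine (lintegral_mono fun x => lintegral_jump_mul_le hκ.measurable_profile
      (fun x z hz => hκ.rate_le (hS s) x hz) (fun z => hg (x, z)) x).trans ?_
    rw [lintegral_const_mul _ measurable_weight]
    exact mul_le_mul' le_rfl (hS s)
  refine ne_top_of_le_ne_top ?_ (lintegral_mono bound)
  rw [setLIntegral_const, Real.volume_Ico]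
  finiteness

section YPlus

variable {u : ℝ → ℝ}

theorem rpow_neg_zero_add_rpow_two (x : ℝ) : x ^ (-(0 : ℝ)) + x ^ (2 : ℝ) = 1 + x ^ 2 := by
  rw [neg_zero, Real.rpow_zero, Real.rpow_two]

theorem _root_.MemYplus.integrableOn_one_add_sq_mul (hu : MemYplus 0 2 u) :
    IntegrableOn (fun x => (1 + x ^ 2) * u x) (Ioi 0) := by
  refine Integrable.congr hu.1.2 ?_
  filter_upwards [hu.2] with x hx
  rw [rpow_neg_zero_add_rpow_two, abs_of_nonneg hx]

theorem _root_.MemYplus.integrableOn (hu : MemYplus 0 2 u) : IntegrableOn u (Ioi 0) := by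
  refine Integrable.mono hu.integrableOn_one_add_sq_mul hu.1.1.aestronglyMeasurable
    (ae_of_all _ fun x => ?_)
  rw [norm_mul, Real.norm_of_nonneg (by positivity : 0 ≤ 1 + x ^ 2)]
  exact le_mul_of_one_le_left (norm_nonneg _) (le_add_of_nonneg_right (sq_nonneg x))

theorem _root_.BddMeas.integrableOn_mul {f : ℝ → ℝ} (hf : BddMeas f)
    (hu : IntegrableOn u (Ioi 0)) : IntegrableOn (fun x => f x * u x) (Ioi 0) :=
  Integrable.bdd_mul hu hf.1.aestronglyMeasurable (ae_of_all _ hf.2.choose_spec)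

theorem setIntegral_mul_sub_eq {f v : ℝ → ℝ} (hf : BddMeas f) (hu : IntegrableOn u (Ioi 0))
    (hv : IntegrableOn v (Ioi 0)) : ∫ x in Ioi 0, f x * (u x - v x)
      = (∫ x in Ioi 0, f x * u x) - ∫ x in Ioi 0, f x * v x := by
  simp only [mul_sub]
  exact integral_sub (hf.integrableOn_mul hu) (hf.integrableOn_mul hv)

theorem bddMeas_of_le_one {g : ℝ → ℝ} (hg : Measurable g) (hg0 : ∀ x, 0 ≤ g x)
    (hg1 : ∀ x, g x ≤ 1) : BddMeas g :=
  ⟨hg, 1, fun x => (abs_of_nonneg (hg0 x)).trans_le (hg1 x)⟩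

end YPlus

section

variable (hc : IsDensity c m)

include hc

theorem IsDensity.setIntegral_mul_eq_toReal {g : ℝ → ℝ} (hg : Measurable g)
    (hg0 : ∀ x, 0 < x → 0 ≤ g x) (s : ℝ) :
    ∫ x in Ioi 0, g x * c s x = (∫⁻ x, ENNReal.ofReal (g x) ∂m s).toReal := by
  rw [hc.eq_withDensity, setIntegral_Ioi_mul_eq_toReal (hc.measurable_right s)
    (ae_of_all _ (hc.nonneg s)) hg hg0]

theorem IsDensity.memYplus {s : ℝ} (hs : ∫⁻ x, weight x ∂m s ≠ ∞) : MemYplus 0 2 (c s) := by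
  have hc0 : 0 ≤ᵐ[halfLine] c s := ae_of_all _ (hc.nonneg s)
  rw [hc.eq_withDensity] at hs
  have := (integrableOn_Ioi_mul_iff (hc.measurable_right s) hc0 (g := fun x => 1 + x ^ 2)
    (by fun_prop) fun x _ => by positivity).2 hs
  refine ⟨⟨hc.measurable_right s, ?_⟩, hc0⟩
  simpa only [rpow_neg_zero_add_rpow_two, abs_of_nonneg (hc.nonneg s _)] using this

theorem IsDensity.ynorm_eq (s : ℝ) : Ynorm 0 2 (c s) = (∫⁻ x, weight x ∂m s).toReal := by
  simp only [Ynorm, rpow_neg_zero_add_rpow_two, abs_of_nonneg (hc.nonneg s _)]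
  exact hc.setIntegral_mul_eq_toReal (g := fun x => 1 + x ^ 2) (by fun_prop)
    (fun x _ => by positivity) s

theorem setIntegral_mul_collision (hK : IsKernel K) {g : ℝ × ℝ → ℝ} (hg : Measurable g)
    (hg0 : ∀ p, 0 ≤ g p) (t : ℝ) :
    ∫ p in Ioc 0 t ×ˢ Dcgedg, g (p.2.1, p.2.2.2) * collision K c p
      = (∫⁻ s in Ico 0 t, ∫⁻ x, ∫⁻ z, rate (fun x y z => ENNReal.ofReal (K x y z)) (m s) (x, z)
          * ENNReal.ofReal (g (x, z)) ∂halfLine ∂m s).toReal := by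
  have := measurable_collision hK hc
  rw [← setLIntegral_collision_mul hK hc (g := fun p => ENNReal.ofReal (g p)) (by fun_prop) t,
    integral_eq_lintegral_of_nonneg_ae
    (ae_of_all _ fun p => mul_nonneg (hg0 _) (collision_nonneg hK hc p)) (by fun_prop)]
  congr 1
  refine lintegral_congr fun p => ?_
  rw [mul_comm, ENNReal.ofReal_mul (collision_nonneg hK hc p)]

end

section

variable (hK : IsKernel K) (hκ : IsQuadraticKernel φ fun x y z => ENNReal.ofReal (K x y z))
  (hΦ0 : mass φ ≠ ∞) (hT : riccati φ a (ENNReal.ofReal T) ≠ ∞)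
  (hm : IsMeasureSolution φ (fun x y z => ENNReal.ofReal (K x y z)) a T ρ m) (hc : IsDensity c m)

include hK hκ hΦ0 hT hm hc

theorem integrableOn_collision : IntegrableOn (collision K c) (Ioc 0 t ×ˢ Dcgedg) := by
  have := measurable_collision hK hc
  refine (lintegral_ofReal_ne_top_iff_integrable (by fun_prop)
    (ae_of_all _ (collision_nonneg hK hc))).1 ?_
  have lintegral_collision :=
    setLIntegral_collision_mul hK hc (g := fun _ => 1) measurable_const t
  simp only [mul_one] at lintegral_collision
  rw [lintegral_collision]
  simpa only [mul_one] using
    hm.setLIntegral_jump_ne_top hκ hΦ0 hT (t := t) (g := fun _ => 1) fun _ => by norm_num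

theorem integrableOn_mul_collision {g : ℝ × ℝ → ℝ} (hg : Measurable g) {C : ℝ}
    (hC : ∀ p, |g p| ≤ C) :
    IntegrableOn (fun p => g (p.2.1, p.2.2.2) * collision K c p) (Ioc 0 t ×ˢ Dcgedg) :=
  (integrableOn_collision hK hκ hΦ0 hT hm hc).bdd_mul (c := C)
    (Measurable.aestronglyMeasurable (by fun_prop)) (ae_of_all _ fun _ => hC _)

theorem toReal_sub_eq_setIntegral_dLap (ht : 0 ≤ t) (htT : t ≤ T) (hρ : ρ univ ≠ ∞) {g : ℝ → ℝ}
    (hg : Measurable g) (hg0 : ∀ x, 0 ≤ g x) (hg1 : ∀ x, g x ≤ 1) :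
    (∫⁻ x, ENNReal.ofReal (g x) ∂m t).toReal - (∫⁻ x, ENNReal.ofReal (g x) ∂ρ).toReal
      = ∫ p in Ioc 0 t ×ˢ Dcgedg, dLap g p.2.2.2 p.2.1 * collision K c p := by
  have ofReal_le_one (x : ℝ) : ENNReal.ofReal (g x) ≤ 1 := ENNReal.ofReal_le_one.2 (hg1 x)
  have two_mul_ofReal (x : ℝ) : 2 * ENNReal.ofReal (g x) = ENNReal.ofReal (2 * g x) := by
    rw [ENNReal.ofReal_mul zero_le_two, ENNReal.ofReal_ofNat]
  have lintegral_ne_top {μ : Measure ℝ} (hμ : μ univ ≠ ∞) : ∫⁻ x, ENNReal.ofReal (g x) ∂μ ≠ ∞ :=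
    ne_top_of_le_ne_top hμ ((lintegral_mono ofReal_le_one).trans_eq lintegral_one)
  have jump_le {y : ℝ} (hy : y ≤ 2) : ENNReal.ofReal y ≤ 2 * 1 := by
    rw [mul_one]
    exact ENNReal.ofReal_le_ofNat.2 hy
  have gain_le (p : ℝ × ℝ) : g (p.1 + p.2) + g (p.1 - p.2) ≤ 2 := by
    linarith [hg1 (p.1 + p.2), hg1 (p.1 - p.2)]
  have loss_le (p : ℝ × ℝ) : 2 * g p.1 ≤ 2 := by linarith [hg1 p.1]
  have gain_nonneg (p : ℝ × ℝ) : 0 ≤ g (p.1 + p.2) + g (p.1 - p.2) := add_nonneg (hg0 _) (hg0 _)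
  have loss_nonneg (p : ℝ × ℝ) : 0 ≤ 2 * g p.1 := mul_nonneg zero_le_two (hg0 _)
  have balance := hm.weak t ht htT _ hg.ennreal_ofReal ofReal_le_one
  simp only [loss, gain, ← ENNReal.ofReal_add (hg0 _) (hg0 _), two_mul_ofReal] at balance
  apply_fun ENNReal.toReal at balance
  rw [ENNReal.toReal_add (lintegral_ne_top (ne_top_of_le_ne_top hT (hm.measure_univ_le t)))
      (hm.setLIntegral_jump_ne_top hκ hΦ0 hT (g := fun p => ENNReal.ofReal (2 * g p.1))
        fun p => jump_le (loss_le p)),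
    ENNReal.toReal_add (lintegral_ne_top hρ) (hm.setLIntegral_jump_ne_top hκ hΦ0 hT
      (g := fun p => ENNReal.ofReal (g (p.1 + p.2) + g (p.1 - p.2))) fun p => jump_le (gain_le p)),
    ← setIntegral_mul_collision hc hK (g := fun p => 2 * g p.1) (by fun_prop) loss_nonneg,
    ← setIntegral_mul_collision hc hK (g := fun p => g (p.1 + p.2) + g (p.1 - p.2)) (by fun_prop)
      gain_nonneg] at balance
  rw [sub_eq_sub_iff_add_eq_add.2 (balance.trans (add_comm _ _)), ← integral_sub
    (integrableOn_mul_collision hK hκ hΦ0 hT hm hc (g := fun p => g (p.1 + p.2) + g (p.1 - p.2))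
      (by fun_prop) fun p => (abs_of_nonneg (gain_nonneg p)).trans_le (gain_le p))
    (integrableOn_mul_collision hK hκ hΦ0 hT hm hc (g := fun p => 2 * g p.1) (by fun_prop)
      fun p => (abs_of_nonneg (loss_nonneg p)).trans_le (loss_le p))]
  congr 1
  ext p
  rw [dLap]
  ring

end

section BoundedTestFunctions

variable {f : ℝ → ℝ}

theorem _root_.BddMeas.exists_affine (hf : BddMeas f) : ∃ (A B : ℝ) (g : ℝ → ℝ),
    Measurable g ∧ (∀ x, 0 ≤ g x) ∧ (∀ x, g x ≤ 1) ∧ f = fun x => A * g x + B := by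
  obtain ⟨hf_meas, M, hM⟩ := hf
  have abs_f (x : ℝ) := abs_le.1 ((hM x).trans ((le_abs_self M).trans (lt_add_one _).le))
  refine ⟨2 * (|M| + 1), -(|M| + 1), fun x => (f x + (|M| + 1)) / (2 * (|M| + 1)), by fun_prop,
    fun x => div_nonneg (neg_le_iff_add_nonneg.1 (abs_f x).1) (by positivity),
    fun x => (div_le_one (by positivity)).2 (by linarith [(abs_f x).2]), ?_⟩
  ext x
  field_simp
  ring

theorem abs_dLap_le {M : ℝ} (hM : ∀ x, |f x| ≤ M) (z x : ℝ) : |dLap f z x| ≤ 4 * M := by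
  have h₁ := abs_le.1 (hM (x + z))
  have h₂ := abs_le.1 (hM x)
  have h₃ := abs_le.1 (hM (x - z))
  rw [dLap, abs_le]
  constructor <;> linarith

theorem measurable_dLap (hf : Measurable f) : Measurable fun p : ℝ × ℝ => dLap f p.2 p.1 := by
  unfold dLap
  fun_prop

end BoundedTestFunctions

variable (hK : IsKernel K) (hκ : IsQuadraticKernel φ fun x y z => ENNReal.ofReal (K x y z))
  (hΦ0 : mass φ ≠ ∞) (hT : riccati φ a (ENNReal.ofReal T) ≠ ∞) (hc₀ : MemYplus 0 2 c₀)
  (hm : IsMeasureSolution φ (fun x y z => ENNReal.ofReal (K x y z)) a T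
    (halfLine.withDensity fun x => ENNReal.ofReal (c₀ x)) m) (hc : IsDensity c m)

section

include hT hm hc

theorem memYplus_of_isMeasureSolution : MemYplus 0 2 (c t) :=
  hc.memYplus (ne_top_of_le_ne_top hT (hm.lintegral_weight_le_riccati t))

end

include hK hκ hΦ0 hT hc₀ hm hc

theorem setIntegral_mul_sub_of_le_one (ht : 0 ≤ t) (htT : t ≤ T) {g : ℝ → ℝ} (hg : Measurable g)
    (hg0 : ∀ x, 0 ≤ g x) (hg1 : ∀ x, g x ≤ 1) :
    ∫ x in Ioi 0, g x * (c t x - c₀ x)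
      = ∫ p in Ioc 0 t ×ˢ Dcgedg, dLap g p.2.2.2 p.2.1 * collision K c p := by
  have hρ : (halfLine.withDensity fun x => ENNReal.ofReal (c₀ x)) univ ≠ ∞ := by
    rw [withDensity_apply _ .univ, setLIntegral_univ]
    exact hc₀.integrableOn.lintegral_lt_top.ne
  rw [setIntegral_mul_sub_eq (bddMeas_of_le_one hg hg0 hg1)
      (memYplus_of_isMeasureSolution hT hm hc).integrableOn hc₀.integrableOn,
    hc.setIntegral_mul_eq_toReal hg (fun x _ => hg0 x),
    setIntegral_Ioi_mul_eq_toReal hc₀.1.1 hc₀.2 hg (fun x _ => hg0 x),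
    toReal_sub_eq_setIntegral_dLap hK hκ hΦ0 hT hm hc ht htT hρ hg hg0 hg1]

theorem setIntegral_mul_sub {f : ℝ → ℝ} (hf : BddMeas f) (ht : 0 ≤ t) (htT : t ≤ T) :
    ∫ x in Ioi 0, f x * (c t x - c₀ x)
      = ∫ p in Ioc 0 t ×ˢ Dcgedg, dLap f p.2.2.2 p.2.1 * collision K c p := by
  obtain ⟨A, B, g, hg, hg0, hg1, rfl⟩ := hf.exists_affine
  have mass_conserved : ∫ x in Ioi 0, (c t x - c₀ x) = 0 := by
    have := setIntegral_mul_sub_of_le_one hK hκ hΦ0 hT hc₀ hm hc ht htT (g := fun _ => 1)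
      measurable_const (fun _ => zero_le_one) (fun _ => le_rfl)
    simp only [one_mul] at this
    rw [this]
    exact integral_eq_zero_of_ae (ae_of_all _ fun p => by simp only [dLap]; norm_num)
  have sub_integrable : IntegrableOn (fun x => c t x - c₀ x) (Ioi 0) :=
    Integrable.sub (memYplus_of_isMeasureSolution hT hm hc).integrableOn hc₀.integrableOn
  calc ∫ x in Ioi 0, (A * g x + B) * (c t x - c₀ x)
      = A * (∫ x in Ioi 0, g x * (c t x - c₀ x)) + B * ∫ x in Ioi 0, (c t x - c₀ x) := by
        rw [← integral_const_mul, ← integral_const_mul, ← integral_add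
          (((bddMeas_of_le_one hg hg0 hg1).integrableOn_mul sub_integrable).const_mul A)
          (sub_integrable.const_mul B)]
        exact integral_congr_ae (ae_of_all _ fun x => by ring)
    _ = ∫ p in Ioc 0 t ×ˢ Dcgedg, A * (dLap g p.2.2.2 p.2.1 * collision K c p) := by
        rw [mass_conserved, mul_zero, add_zero, integral_const_mul,
          setIntegral_mul_sub_of_le_one hK hκ hΦ0 hT hc₀ hm hc ht htT hg hg0 hg1]
    _ = _ := by
        congr 1
        ext p
        rw [dLap, dLap]
        ring

theorem continuousOn_setIntegral_mul {f : ℝ → ℝ} (hf : BddMeas f) :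
    ContinuousOn (fun t => ∫ x in Ioi 0, f x * c t x) (Icc 0 T) := by
  have integrable := integrableOn_mul_collision hK hκ hΦ0 hT hm hc (t := T)
    (measurable_dLap hf.1) fun p => abs_dLap_le hf.2.choose_spec p.2 p.1
  refine ContinuousOn.congr (continuousOn_const (c := ∫ x in Ioi 0, f x * c₀ x) |>.add
    (continuousOn_setIntegral_Ioc_prod integrable)) fun t ht => ?_
  have identity := setIntegral_mul_sub hK hκ hΦ0 hT hc₀ hm hc hf ht.1 ht.2
  rw [setIntegral_mul_sub_eq hf (memYplus_of_isMeasureSolution hT hm hc).integrableOn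
    hc₀.integrableOn] at identity
  exact sub_eq_iff_eq_add'.1 identity

theorem isWeakSolution_of_isMeasureSolution :
    IsWeakSolution K 0 2 (ENNReal.ofReal T) c₀ c where
  mem _ _ _ := memYplus_of_isMeasureSolution hT hm hc
  cont f hf := (continuousOn_setIntegral_mul hK hκ hΦ0 hT hc₀ hm hc hf).mono fun t ht =>
    ⟨ht.1, ((ENNReal.ofReal_lt_ofReal_iff_of_nonneg ht.1).1 ht.2).le⟩
  bdd := ⟨(riccati φ a (ENNReal.ofReal T)).toReal, fun t _ _ => by
    rw [hc.ynorm_eq]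
    exact ENNReal.toReal_mono hT (hm.lintegral_weight_le_riccati t)⟩
  integ _ _ _ := integrableOn_collision hK hκ hΦ0 hT hm hc
  weak t ht htT f hf := setIntegral_mul_sub hK hκ hΦ0 hT hc₀ hm hc hf ht
    ((ENNReal.ofReal_lt_ofReal_iff_of_nonneg ht).1 htT).le

end WeakSolution

section Moments

variable {u : ℝ → ℝ}

theorem mom_zero_eq (u : ℝ → ℝ) : Mom 0 u = ∫ x in Ioi 0, u x := by
  simp only [Mom, Real.rpow_zero, one_mul]

theorem mom_two_eq (u : ℝ → ℝ) : Mom 2 u = ∫ x in Ioi 0, x ^ 2 * u x := by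
  simp only [Mom, Real.rpow_two]

theorem _root_.MemYplus.integrableOn_sq_mul (hu : MemYplus 0 2 u) :
    IntegrableOn (fun x => x ^ 2 * u x) (Ioi 0) := by
  refine (Integrable.sub hu.integrableOn_one_add_sq_mul hu.integrableOn).congr
    (ae_of_all _ fun x => ?_)
  rw [Pi.sub_apply]
  ring

theorem _root_.MemYplus.mom_zero_add_mom_two (hu : MemYplus 0 2 u) :
    Mom 0 u + Mom 2 u = ∫ x in Ioi 0, (1 + x ^ 2) * u x := by
  rw [mom_zero_eq, mom_two_eq, ← integral_add hu.integrableOn hu.integrableOn_sq_mul]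
  congr 1
  ext x
  ring

theorem _root_.MemYplus.phiNorm_two (hu : MemYplus 0 2 u) : phiNorm 2 u = Mom 0 u + Mom 2 u := by
  simp only [hu.mom_zero_add_mom_two, phiNorm, Real.rpow_two]

theorem _root_.MemYplus.sq_mul_nonneg (hu : MemYplus 0 2 u) :
    0 ≤ᵐ[halfLine] fun x => x ^ 2 * u x := by
  filter_upwards [hu.2] with x hx using mul_nonneg (sq_nonneg x) hx

theorem _root_.MemYplus.mom_two_nonneg (hu : MemYplus 0 2 u) : 0 ≤ Mom 2 u := by
  rw [mom_two_eq]
  exact integral_nonneg_of_ae hu.sq_mul_nonneg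

theorem _root_.MemYplus.mom_zero_nonneg (hu : MemYplus 0 2 u) : 0 ≤ Mom 0 u := by
  rw [mom_zero_eq]
  exact integral_nonneg_of_ae hu.2

theorem _root_.MemYplus.mom_zero_eq_zero_iff (hu : MemYplus 0 2 u) :
    Mom 0 u = 0 ↔ u =ᵐ[halfLine] 0 := by
  rw [mom_zero_eq]
  exact integral_eq_zero_iff_of_nonneg_ae hu.2 hu.integrableOn

theorem _root_.MemYplus.mass_eq (hu : MemYplus 0 2 u) :
    mass (fun z => ENNReal.ofReal (u z)) = ENNReal.ofReal (Mom 0 u) := by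
  rw [mom_zero_eq, ofReal_integral_eq_lintegral_ofReal hu.integrableOn hu.2]
  rfl

theorem _root_.MemYplus.secondMoment_eq (hu : MemYplus 0 2 u) :
    secondMoment (fun z => ENNReal.ofReal (u z)) = ENNReal.ofReal (Mom 2 u) := by
  rw [mom_two_eq, ofReal_integral_eq_lintegral_ofReal hu.integrableOn_sq_mul hu.sq_mul_nonneg]
  simp only [secondMoment, ENNReal.ofReal_mul (sq_nonneg _)]
  rfl

theorem _root_.MemYplus.lintegral_weight (hu : MemYplus 0 2 u) :
    ∫⁻ x, weight x ∂halfLine.withDensity (fun x => ENNReal.ofReal (u x))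
      = ENNReal.ofReal (Mom 0 u + Mom 2 u) := by
  unfold weight
  rw [lintegral_withDensity_halfLine (g := fun x => 1 + x ^ 2) hu.1.1 (by fun_prop)
    fun x _ => by positivity, hu.mom_zero_add_mom_two,
    ofReal_integral_eq_lintegral_ofReal hu.integrableOn_one_add_sq_mul]
  · rfl
  · filter_upwards [hu.2] with x hx using mul_nonneg (by positivity) hx

theorem _root_.MemYplus.riccati_eq (hu : MemYplus 0 2 u) {b t : ℝ} (ht : 0 ≤ t)
    (htb : 2 * Mom 2 u * t < b) :
    riccati (fun z => ENNReal.ofReal (u z)) (ENNReal.ofReal b) (ENNReal.ofReal t)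
      = ENNReal.ofReal (b - 2 * Mom 2 u * t)⁻¹ := by
  have hM : 0 ≤ 2 * Mom 2 u := mul_nonneg zero_le_two hu.mom_two_nonneg
  rw [riccati, hu.secondMoment_eq, ENNReal.ofReal_inv_of_pos (sub_pos.2 htb),
    ENNReal.ofReal_sub _ (mul_nonneg hM ht), ENNReal.ofReal_mul hM, ENNReal.ofReal_mul zero_le_two,
    ENNReal.ofReal_ofNat]

theorem _root_.MemYplus.two_mul_mom_two_mul_inv_lt (hu : MemYplus 0 2 u) {M : ℝ} (hM : 0 < M) :
    2 * Mom 2 u * (2 * phiNorm 2 u * M)⁻¹ < M⁻¹ := by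
  rcases hu.mom_zero_nonneg.eq_or_lt with h0 | h0
  · have : phiNorm 2 u = 0 := integral_eq_zero_of_ae <| by
      filter_upwards [hu.mom_zero_eq_zero_iff.1 h0.symm] with x hx
      rw [hx, Pi.zero_apply, mul_zero]
    rw [this, mul_zero, zero_mul, inv_zero, mul_zero]
    exact inv_pos.2 hM
  · have h2 := hu.mom_two_nonneg
    rw [hu.phiNorm_two, ← div_eq_mul_inv, div_lt_iff₀ (by positivity)]
    field_simp
    linarith

end Moments

section Existence

variable {K : ℝ → ℝ → ℝ → ℝ} {φ : ℝ → ℝ≥0∞} {κ : ℝ → ℝ → ℝ → ℝ≥0∞} {a : ℝ≥0∞} {T : ℝ}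
  {m : ℝ → Measure ℝ} {c : ℝ → ℝ → ℝ} {c₀ : ℝ → ℝ}

theorem IsMeasureSolution.mom_eq (hm : IsMeasureSolution φ κ a T
      (halfLine.withDensity fun x => ENNReal.ofReal (c₀ x)) m) (hc : IsDensity c m)
    (hc₀ : MemYplus 0 2 c₀) {p : ℝ} (hp : ∀ x, ENNReal.ofReal (x ^ p) ≤ weight x)
    (hp_harmonic : ∀ x z : ℝ, (x + z) ^ p + (x - z) ^ p = 2 * x ^ p) (t : ℝ) :
    Mom p (c t) = Mom p c₀ := by
  have rpow_nonneg {x : ℝ} (hx : 0 ≤ x) : 0 ≤ x ^ p := Real.rpow_nonneg hx p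
  have rpow_meas : Measurable fun x : ℝ => x ^ p := by fun_prop
  rw [Mom, Mom, hc.setIntegral_mul_eq_toReal rpow_meas (fun x hx => rpow_nonneg hx.le),
    setIntegral_Ioi_mul_eq_toReal hc₀.1.1 hc₀.2 rpow_meas (fun x hx => rpow_nonneg hx.le),
    hm.lintegral_eq _ rpow_meas.ennreal_ofReal hp]
  intro x z hz hzx
  rw [← ENNReal.ofReal_add (rpow_nonneg (by linarith)) (rpow_nonneg (by linarith)), hp_harmonic,
    ENNReal.ofReal_mul zero_le_two, ENNReal.ofReal_ofNat]

theorem ofReal_le_weight (x : ℝ) : ENNReal.ofReal x ≤ weight x :=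
  ENNReal.ofReal_le_ofReal (by nlinarith [sq_nonneg (x - 1)])

variable {φ : ℝ → ℝ} (hK : IsKernel K) (hφ : MemYplus 0 2 φ)
  (hbound : ∀ x y z, 0 ≤ x → 0 ≤ y → 0 ≤ z →
    K x y z ≤ checkm x ^ (2 : ℝ) * checkm y ^ (2 : ℝ) * φ z)
  (hderiv : SecondDerivBound K 0 2 φ) (hc₀ : MemYplus 0 2 c₀) (hM : 0 < Mom 0 c₀ + Mom 2 c₀)

include hK hφ hbound hderiv hc₀ hM

theorem exists_isMeasureSolution_isDensity (hT : riccati (fun z => ENNReal.ofReal (φ z))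
      (ENNReal.ofReal (Mom 0 c₀ + Mom 2 c₀)⁻¹) (ENNReal.ofReal T) ≠ ∞) :
    ∃ (m : ℝ → Measure ℝ) (c : ℝ → ℝ → ℝ), IsDensity c m ∧
      IsMeasureSolution (fun z => ENNReal.ofReal (φ z)) (fun x y z => ENNReal.ofReal (K x y z))
        (ENNReal.ofReal (Mom 0 c₀ + Mom 2 c₀)⁻¹) T
        (halfLine.withDensity fun x => ENNReal.ofReal (c₀ x)) m := by
  have weight_le : ∫⁻ x, weight x ∂halfLine.withDensity (fun x => ENNReal.ofReal (c₀ x))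
      ≤ (ENNReal.ofReal (Mom 0 c₀ + Mom 2 c₀)⁻¹)⁻¹ := by
    rw [hc₀.lintegral_weight, ENNReal.ofReal_inv_of_pos hM, inv_inv]
  obtain ⟨m, hm⟩ := exists_isMeasureSolution (isQuadraticKernel_ofReal hK hφ.1.1 hbound hderiv)
    (hφ.secondMoment_eq ▸ ENNReal.ofReal_ne_top) (hφ.mass_eq ▸ ENNReal.ofReal_ne_top)
    hc₀.1.1.ennreal_ofReal (fun _ => ENNReal.ofReal_ne_top) weight_le hT
  have Iio_zero : halfLine.withDensity (fun x => ENNReal.ofReal (c₀ x)) (Iio 0) = 0 :=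
    withDensity_absolutelyContinuous _ _ <| by
      rw [halfLine, Measure.restrict_apply measurableSet_Iio, Iio_inter_Ioi, Ioo_self,
        measure_empty]
  obtain ⟨c, hc⟩ := hm.exists_isDensity Iio_zero hT
  exact ⟨m, c, hc, hm⟩

theorem exists_isWeakSolution_mom_le (hT0 : 0 ≤ T)
    (hT : 2 * Mom 2 φ * T < (Mom 0 c₀ + Mom 2 c₀)⁻¹) :
    ∃ c : ℝ → ℝ → ℝ, IsWeakSolution K 0 2 (ENNReal.ofReal T) c₀ c ∧
      ∀ t : ℝ, 0 ≤ t → ENNReal.ofReal t < ENNReal.ofReal T →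
        Mom 0 (c t) = Mom 0 c₀ ∧ Mom 1 (c t) = Mom 1 c₀ ∧
        Mom 2 (c t) ≤ ((Mom 0 c₀ + Mom 2 c₀)⁻¹ - 2 * Mom 2 φ * t)⁻¹ - Mom 0 c₀ := by
  have riccati_ne_top : riccati (fun z => ENNReal.ofReal (φ z))
      (ENNReal.ofReal (Mom 0 c₀ + Mom 2 c₀)⁻¹) (ENNReal.ofReal T) ≠ ∞ :=
    hφ.riccati_eq hT0 hT ▸ ENNReal.ofReal_ne_top
  obtain ⟨m, c, hc, hm⟩ :=
    exists_isMeasureSolution_isDensity hK hφ hbound hderiv hc₀ hM riccati_ne_top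
  refine ⟨c, isWeakSolution_of_isMeasureSolution hK
    (isQuadraticKernel_ofReal hK hφ.1.1 hbound hderiv) (hφ.mass_eq ▸ ENNReal.ofReal_ne_top)
    riccati_ne_top hc₀ hm hc, fun t ht htT => ?_⟩
  have htT := ((ENNReal.ofReal_lt_ofReal_iff_of_nonneg ht).1 htT).le
  have mass_conserved : Mom 0 (c t) = Mom 0 c₀ := hm.mom_eq hc hc₀
    (fun x => by simpa using one_le_weight x) (fun x z => by norm_num) t
  have first_conserved : Mom 1 (c t) = Mom 1 c₀ := hm.mom_eq hc hc₀
    (fun x => by simpa using ofReal_le_weight x) (fun x z => by simp only [Real.rpow_one]; ring) t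
  refine ⟨mass_conserved, first_conserved, ?_⟩
  have htM : 2 * Mom 2 φ * t < (Mom 0 c₀ + Mom 2 c₀)⁻¹ :=
    (mul_le_mul_of_nonneg_left htT (mul_nonneg zero_le_two hφ.mom_two_nonneg)).trans_lt hT
  have bound := hm.lintegral_weight_le t
  rw [min_eq_left htT, hφ.riccati_eq ht htM, hc.eq_withDensity,
    (memYplus_of_isMeasureSolution riccati_ne_top hm hc).lintegral_weight,
    ENNReal.ofReal_le_ofReal_iff (inv_nonneg.2 (sub_nonneg.2 htM.le)), mass_conserved] at bound
  linarith

end Existence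

end CGEDG

/-- Finite-time existence for kernels of quadratic growth. -/
theorem cgedg_finite_time_existence
    (K : ℝ → ℝ → ℝ → ℝ) (φ : ℝ → ℝ) (hK : IsKernel K)
    (hφ : MemYplus 0 2 φ)
    (hbound : ∀ x y z : ℝ, 0 ≤ x → 0 ≤ y → 0 ≤ z →
      K x y z ≤ checkm x ^ (2:ℝ) * checkm y ^ (2:ℝ) * φ z)
    (hderiv : SecondDerivBound K 0 2 φ)
    (c₀ : ℝ → ℝ) (hc₀ : MemYplus 0 2 c₀)
    (hc₀ne : ¬ c₀ =ᵐ[volume.restrict (Ioi (0:ℝ))] 0) :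
    ∃ c : ℝ → ℝ → ℝ,
      IsWeakSolution K 0 2
        (ENNReal.ofReal ((2 * phiNorm 2 φ * (Mom 0 c₀ + Mom 2 c₀))⁻¹)) c₀ c ∧
      ∀ t : ℝ, 0 ≤ t →
        ENNReal.ofReal t <
          ENNReal.ofReal ((2 * phiNorm 2 φ * (Mom 0 c₀ + Mom 2 c₀))⁻¹) →
        Mom 0 (c t) = Mom 0 c₀ ∧ Mom 1 (c t) = Mom 1 c₀ ∧
        Mom 2 (c t) ≤ ((Mom 0 c₀ + Mom 2 c₀)⁻¹ - 2 * phiNorm 2 φ * t)⁻¹ - Mom 0 c₀ := by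
  have hM : 0 < Mom 0 c₀ + Mom 2 c₀ := add_pos_of_pos_of_nonneg
    (hc₀.mom_zero_nonneg.lt_of_ne' (hc₀.mom_zero_eq_zero_iff.not.2 hc₀ne)) hc₀.mom_two_nonneg
  have mom_two_le : Mom 2 φ ≤ phiNorm 2 φ :=
    hφ.phiNorm_two ▸ le_add_of_nonneg_left hφ.mom_zero_nonneg
  have phiNorm_nonneg : 0 ≤ phiNorm 2 φ := hφ.mom_two_nonneg.trans mom_two_le
  obtain ⟨c, hc, hmom⟩ := CGEDG.exists_isWeakSolution_mom_le hK hφ hbound hderiv hc₀ hM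
    (by positivity) (hφ.two_mul_mom_two_mul_inv_lt hM)
  refine ⟨c, hc, fun t ht htT => ?_⟩
  obtain ⟨mass_conserved, first_conserved, mom_two_bound⟩ := hmom t ht htT
  refine ⟨mass_conserved, first_conserved, mom_two_bound.trans ?_⟩
  have htT := (ENNReal.ofReal_lt_ofReal_iff_of_nonneg ht).1 htT
  have phiNorm_pos : 0 < 2 * phiNorm 2 φ :=
    (mul_pos_iff_of_pos_right hM).1 (inv_pos.1 (ht.trans_lt htT))
  have riccati_pos : 0 < (Mom 0 c₀ + Mom 2 c₀)⁻¹ - 2 * phiNorm 2 φ * t := by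
    rw [mul_inv, ← div_eq_inv_mul, lt_div_iff₀ phiNorm_pos] at htT
    linarith
  gcongr
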